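/- The limsup as N → ∞ of the quantity inf_P ‖D_P | L₂‖ · (log N)^{-1/2}, where the infimum is taken over all N-point sets P in [0,1)², is at least 0.061. -/

import Mathlib

open MeasureTheory

noncomputable section

/-- The half-open unit square `[0,1) × [0,1)` in `ℝ × ℝ`. -/
def unitSq : Set (ℝ × ℝ) := Set.Ico (0:ℝ) 1 ×ˢ Set.Ico (0:ℝ) 1

/-- The discrepancy function of the point configuration `p`. -/
def disc (N : ℕ) (p : Fin N → ℝ × ℝ) (x : ℝ × ℝ) : ℝ :=
  (∑ i : Fin N, if 0 ≤ (p i).1 ∧ (p i).1 < x.1 ∧ 0 ≤ (p i).2 ∧ (p i).2 < x.2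
    then (1:ℝ) else 0) - N * x.1 * x.2

/-- The `L₂`-discrepancy `‖D_P | L₂‖ = (∫_{[0,1)²} D_P(x)² dx)^{1/2}`. -/
def L2disc (N : ℕ) (p : Fin N → ℝ × ℝ) : ℝ :=
  Real.sqrt (∫ x in unitSq, disc N p x ^ 2)

/-- Distance to the nearest integer. -/
def tau (y : ℝ) : ℝ := min (Int.fract y) (1 - Int.fract y)

lemma tau_nonneg (y : ℝ) : 0 ≤ tau y := by
  unfold tau
  have h1 := Int.fract_nonneg y
  have h2 := Int.fract_lt_one y
  exact le_min h1 (by linarith)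

lemma tau_le_half (y : ℝ) : tau y ≤ 1 / 2 := by
  unfold tau
  rcases le_total (Int.fract y) (1 - Int.fract y) with h | h
  · rw [min_eq_left h]; linarith
  · rw [min_eq_right h]; linarith

lemma tau_two_mul (y : ℝ) : tau (2 * y) = min (2 * tau y) (1 - 2 * tau y) := by
  have h1 := Int.fract_nonneg y
  have h2 := Int.fract_lt_one y
  have hy := Int.floor_add_fract y
  unfold tau
  by_cases h : Int.fract y < 1 / 2
  · have e : Int.fract (2 * y) = 2 * Int.fract y := by
      rw [Int.fract_eq_iff]
      refine ⟨by linarith, by linarith, 2 * ⌊y⌋, ?_⟩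
      push_cast
      linarith
    rw [e, min_eq_left (show Int.fract y ≤ 1 - Int.fract y by linarith)]
  · push Not at h
    have e : Int.fract (2 * y) = 2 * Int.fract y - 1 := by
      rw [Int.fract_eq_iff]
      refine ⟨by linarith, by linarith, 2 * ⌊y⌋ + 1, ?_⟩
      push_cast
      linarith
    rw [e, min_eq_right (show 1 - Int.fract y ≤ Int.fract y by linarith), min_comm]
    congr 1 <;> ring

/-- The weighted quadratic form attached to a point. -/
def KK (a a1 a2 b b1 b2 : ℝ) : ℝ :=
  ((16 * (a * b)) ^ 2 - 2 * (5 / 4) * (16 * (a * b)))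
  + 1 / 4 * (((16 * (a1 * b)) ^ 2 - 2 * (5 / 8) * (16 * (a1 * b)))
    + ((16 * (a * b1)) ^ 2 - 2 * (5 / 8) * (16 * (a * b1))))
  + 1 / 12 * (((16 * (a1 * b1)) ^ 2 - 2 * (5 / 16) * (16 * (a1 * b1)))
    + ((16 * (a2 * b)) ^ 2 - 2 * (5 / 16) * (16 * (a2 * b)))
    + ((16 * (a * b2)) ^ 2 - 2 * (5 / 16) * (16 * (a * b2))))

lemma KK_symm (a a1 a2 b b1 b2 : ℝ) : KK a a1 a2 b b1 b2 = KK b b1 b2 a a1 a2 := by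
  unfold KK; ring

lemma KK_cell_0_0 (a b : ℝ) (h1 : 0 ≤ a) (h2 : a ≤ 1 / 8) (h3 : 0 ≤ b)
    (h4 : b ≤ 1 / 8) :
    -(111 / 100) ≤ KK a (2 * a) (4 * a) b (2 * b) (4 * b) := by
  have m1 := mul_nonneg (sub_nonneg.2 h1) (sub_nonneg.2 h3)
  have m2 := mul_nonneg (sub_nonneg.2 h1) (sub_nonneg.2 h4)
  have m3 := mul_nonneg (sub_nonneg.2 h2) (sub_nonneg.2 h3)
  have m4 := mul_nonneg (sub_nonneg.2 h2) (sub_nonneg.2 h4)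
  unfold KK
  linarith [sq_nonneg (16 * (a * b) - 1 / 4),
    sq_nonneg (16 * ((2 * a) * b) - 1 / 2),
    sq_nonneg (16 * (a * (2 * b)) - 1 / 2),
    sq_nonneg (16 * ((2 * a) * (2 * b)) - 1),
    sq_nonneg (16 * ((4 * a) * b) - 1),
    sq_nonneg (16 * (a * (4 * b)) - 1)]

lemma KK_cell_1_0 (a b : ℝ) (h1 : 1 / 8 ≤ a) (h2 : a ≤ 1 / 4) (h3 : 0 ≤ b)
    (h4 : b ≤ 1 / 8) :
    -(111 / 100) ≤ KK a (2 * a) (1 - 4 * a) b (2 * b) (4 * b) := by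
  have m1 := mul_nonneg (sub_nonneg.2 h1) (sub_nonneg.2 h3)
  have m2 := mul_nonneg (sub_nonneg.2 h1) (sub_nonneg.2 h4)
  have m3 := mul_nonneg (sub_nonneg.2 h2) (sub_nonneg.2 h3)
  have m4 := mul_nonneg (sub_nonneg.2 h2) (sub_nonneg.2 h4)
  unfold KK
  linarith [sq_nonneg (16 * (a * b) - 45 / 128),
    sq_nonneg (16 * ((2 * a) * b) - 45 / 64),
    sq_nonneg (16 * (a * (2 * b)) - 45 / 64),
    sq_nonneg (16 * ((2 * a) * (2 * b)) - 45 / 32),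
    sq_nonneg (16 * ((1 - 4 * a) * b) - 3 / 32),
    sq_nonneg (16 * (a * (4 * b)) - 45 / 32)]

lemma KK_cell_1_1 (a b : ℝ) (h1 : 1 / 8 ≤ a) (h2 : a ≤ 1 / 4) (h3 : 1 / 8 ≤ b)
    (h4 : b ≤ 1 / 4) :
    -(111 / 100) ≤ KK a (2 * a) (1 - 4 * a) b (2 * b) (1 - 4 * b) := by
  have m1 := mul_nonneg (sub_nonneg.2 h1) (sub_nonneg.2 h3)
  have m2 := mul_nonneg (sub_nonneg.2 h1) (sub_nonneg.2 h4)
  have m3 := mul_nonneg (sub_nonneg.2 h2) (sub_nonneg.2 h3)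
  have m4 := mul_nonneg (sub_nonneg.2 h2) (sub_nonneg.2 h4)
  unfold KK
  linarith [sq_nonneg (16 * (a * b) - 121 / 256),
    sq_nonneg (16 * ((2 * a) * b) - 121 / 128),
    sq_nonneg (16 * (a * (2 * b)) - 121 / 128),
    sq_nonneg (16 * ((2 * a) * (2 * b)) - 121 / 64),
    sq_nonneg (16 * ((1 - 4 * a) * b) - 55 / 64),
    sq_nonneg (16 * (a * (1 - 4 * b)) - 55 / 64)]

lemma KK_cell_2_0 (a b : ℝ) (h1 : 1 / 4 ≤ a) (h2 : a ≤ 3 / 8) (h3 : 0 ≤ b)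
    (h4 : b ≤ 1 / 8) :
    -(111 / 100) ≤ KK a (1 - 2 * a) (4 * a - 1) b (2 * b) (4 * b) := by
  have m1 := mul_nonneg (sub_nonneg.2 h1) (sub_nonneg.2 h3)
  have m2 := mul_nonneg (sub_nonneg.2 h1) (sub_nonneg.2 h4)
  have m3 := mul_nonneg (sub_nonneg.2 h2) (sub_nonneg.2 h3)
  have m4 := mul_nonneg (sub_nonneg.2 h2) (sub_nonneg.2 h4)
  unfold KK
  linarith [sq_nonneg (16 * (a * b) - 15 / 32),
    sq_nonneg (16 * ((1 - 2 * a) * b) - 9 / 16),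
    sq_nonneg (16 * (a * (2 * b)) - 15 / 16),
    sq_nonneg (16 * ((1 - 2 * a) * (2 * b)) - 9 / 8),
    sq_nonneg (16 * ((4 * a - 1) * b) - 3 / 8),
    sq_nonneg (16 * (a * (4 * b)) - 15 / 8)]

lemma KK_cell_2_1 (a b : ℝ) (h1 : 1 / 4 ≤ a) (h2 : a ≤ 3 / 8) (h3 : 1 / 8 ≤ b)
    (h4 : b ≤ 1 / 4) :
    -(111 / 100) ≤ KK a (1 - 2 * a) (4 * a - 1) b (2 * b) (1 - 4 * b) := by
  have m1 := mul_nonneg (sub_nonneg.2 h1) (sub_nonneg.2 h3)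
  have m2 := mul_nonneg (sub_nonneg.2 h1) (sub_nonneg.2 h4)
  have m3 := mul_nonneg (sub_nonneg.2 h2) (sub_nonneg.2 h3)
  have m4 := mul_nonneg (sub_nonneg.2 h2) (sub_nonneg.2 h4)
  unfold KK
  linarith [sq_nonneg (16 * (a * b) - 55 / 64),
    sq_nonneg (16 * ((1 - 2 * a) * b) - 33 / 32),
    sq_nonneg (16 * (a * (2 * b)) - 55 / 32),
    sq_nonneg (16 * ((1 - 2 * a) * (2 * b)) - 33 / 16),
    sq_nonneg (16 * ((4 * a - 1) * b) - 11 / 16),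
    sq_nonneg (16 * (a * (1 - 4 * b)) - 25 / 16)]

lemma KK_cell_2_2 (a b : ℝ) (h1 : 1 / 4 ≤ a) (h2 : a ≤ 3 / 8) (h3 : 1 / 4 ≤ b)
    (h4 : b ≤ 3 / 8) :
    -(111 / 100) ≤ KK a (1 - 2 * a) (4 * a - 1) b (1 - 2 * b) (4 * b - 1) := by
  have m1 := mul_nonneg (sub_nonneg.2 h1) (sub_nonneg.2 h3)
  have m2 := mul_nonneg (sub_nonneg.2 h1) (sub_nonneg.2 h4)
  have m3 := mul_nonneg (sub_nonneg.2 h2) (sub_nonneg.2 h3)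
  have m4 := mul_nonneg (sub_nonneg.2 h2) (sub_nonneg.2 h4)
  unfold KK
  linarith [sq_nonneg (16 * (a * b) - 25 / 16),
    sq_nonneg (16 * ((1 - 2 * a) * b) - 15 / 8),
    sq_nonneg (16 * (a * (1 - 2 * b)) - 15 / 8),
    sq_nonneg (16 * ((1 - 2 * a) * (1 - 2 * b)) - 9 / 4),
    sq_nonneg (16 * ((4 * a - 1) * b) - 5 / 4),
    sq_nonneg (16 * (a * (4 * b - 1)) - 5 / 4)]

lemma KK_cell_3_0 (a b : ℝ) (h1 : 3 / 8 ≤ a) (h2 : a ≤ 1 / 2) (h3 : 0 ≤ b)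
    (h4 : b ≤ 1 / 8) :
    -(111 / 100) ≤ KK a (1 - 2 * a) (2 - 4 * a) b (2 * b) (4 * b) := by
  have m1 := mul_nonneg (sub_nonneg.2 h1) (sub_nonneg.2 h3)
  have m2 := mul_nonneg (sub_nonneg.2 h1) (sub_nonneg.2 h4)
  have m3 := mul_nonneg (sub_nonneg.2 h2) (sub_nonneg.2 h3)
  have m4 := mul_nonneg (sub_nonneg.2 h2) (sub_nonneg.2 h4)
  unfold KK
  linarith [sq_nonneg (16 * (a * b) - 65 / 128),
    sq_nonneg (16 * ((1 - 2 * a) * b) - 15 / 64),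
    sq_nonneg (16 * (a * (2 * b)) - 65 / 64),
    sq_nonneg (16 * ((1 - 2 * a) * (2 * b)) - 15 / 32),
    sq_nonneg (16 * ((2 - 4 * a) * b) - 15 / 32),
    sq_nonneg (16 * (a * (4 * b)) - 65 / 32)]

lemma KK_cell_3_1 (a b : ℝ) (h1 : 3 / 8 ≤ a) (h2 : a ≤ 1 / 2) (h3 : 1 / 8 ≤ b)
    (h4 : b ≤ 1 / 4) :
    -(111 / 100) ≤ KK a (1 - 2 * a) (2 - 4 * a) b (2 * b) (1 - 4 * b) := by
  have m1 := mul_nonneg (sub_nonneg.2 h1) (sub_nonneg.2 h3)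
  have m2 := mul_nonneg (sub_nonneg.2 h1) (sub_nonneg.2 h4)
  have m3 := mul_nonneg (sub_nonneg.2 h2) (sub_nonneg.2 h3)
  have m4 := mul_nonneg (sub_nonneg.2 h2) (sub_nonneg.2 h4)
  unfold KK
  linarith [sq_nonneg (16 * (a * b) - 33 / 32),
    sq_nonneg (16 * ((1 - 2 * a) * b) - 11 / 16),
    sq_nonneg (16 * (a * (2 * b)) - 33 / 16),
    sq_nonneg (16 * ((1 - 2 * a) * (2 * b)) - 11 / 8),
    sq_nonneg (16 * ((2 - 4 * a) * b) - 11 / 8),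
    sq_nonneg (16 * (a * (1 - 4 * b)) - 15 / 8)]

lemma KK_cell_3_2 (a b : ℝ) (h1 : 3 / 8 ≤ a) (h2 : a ≤ 1 / 2) (h3 : 1 / 4 ≤ b)
    (h4 : b ≤ 3 / 8) :
    -(111 / 100) ≤ KK a (1 - 2 * a) (2 - 4 * a) b (1 - 2 * b) (4 * b - 1) := by
  have m1 := mul_nonneg (sub_nonneg.2 h1) (sub_nonneg.2 h3)
  have m2 := mul_nonneg (sub_nonneg.2 h1) (sub_nonneg.2 h4)
  have m3 := mul_nonneg (sub_nonneg.2 h2) (sub_nonneg.2 h3)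
  have m4 := mul_nonneg (sub_nonneg.2 h2) (sub_nonneg.2 h4)
  unfold KK
  linarith [sq_nonneg (16 * (a * b) - 475 / 256),
    sq_nonneg (16 * ((1 - 2 * a) * b) - 133 / 128),
    sq_nonneg (16 * (a * (1 - 2 * b)) - 325 / 128),
    sq_nonneg (16 * ((1 - 2 * a) * (1 - 2 * b)) - 91 / 64),
    sq_nonneg (16 * ((2 - 4 * a) * b) - 133 / 64),
    sq_nonneg (16 * (a * (4 * b - 1)) - 75 / 64)]

lemma KK_cell_3_3 (a b : ℝ) (h1 : 3 / 8 ≤ a) (h2 : a ≤ 1 / 2) (h3 : 3 / 8 ≤ b)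
    (h4 : b ≤ 1 / 2) :
    -(111 / 100) ≤ KK a (1 - 2 * a) (2 - 4 * a) b (1 - 2 * b) (2 - 4 * b) := by
  have m1 := mul_nonneg (sub_nonneg.2 h1) (sub_nonneg.2 h3)
  have m2 := mul_nonneg (sub_nonneg.2 h1) (sub_nonneg.2 h4)
  have m3 := mul_nonneg (sub_nonneg.2 h2) (sub_nonneg.2 h3)
  have m4 := mul_nonneg (sub_nonneg.2 h2) (sub_nonneg.2 h4)
  unfold KK
  linarith [sq_nonneg (16 * (a * b) - 625 / 256),
    sq_nonneg (16 * ((1 - 2 * a) * b) - 175 / 128),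
    sq_nonneg (16 * (a * (1 - 2 * b)) - 175 / 128),
    sq_nonneg (16 * ((1 - 2 * a) * (1 - 2 * b)) - 49 / 64),
    sq_nonneg (16 * ((2 - 4 * a) * b) - 175 / 64),
    sq_nonneg (16 * (a * (2 - 4 * b)) - 175 / 64)]

lemma fold_cases (a : ℝ) :
    (a ≤ 1 / 8 ∧ min (2 * a) (1 - 2 * a) = 2 * a ∧
      min (2 * min (2 * a) (1 - 2 * a)) (1 - 2 * min (2 * a) (1 - 2 * a)) = 4 * a) ∨
    (1 / 8 ≤ a ∧ a ≤ 1 / 4 ∧ min (2 * a) (1 - 2 * a) = 2 * a ∧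
      min (2 * min (2 * a) (1 - 2 * a)) (1 - 2 * min (2 * a) (1 - 2 * a)) = 1 - 4 * a) ∨
    (1 / 4 ≤ a ∧ a ≤ 3 / 8 ∧ min (2 * a) (1 - 2 * a) = 1 - 2 * a ∧
      min (2 * min (2 * a) (1 - 2 * a)) (1 - 2 * min (2 * a) (1 - 2 * a)) = 4 * a - 1) ∨
    (3 / 8 ≤ a ∧ min (2 * a) (1 - 2 * a) = 1 - 2 * a ∧
      min (2 * min (2 * a) (1 - 2 * a)) (1 - 2 * min (2 * a) (1 - 2 * a)) = 2 - 4 * a) := by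
  rcases le_total a (1 / 4) with h | h
  · have e : min (2 * a) (1 - 2 * a) = 2 * a := min_eq_left (by linarith)
    rw [e]
    rcases le_total a (1 / 8) with h' | h'
    · left
      exact ⟨h', rfl, by rw [min_eq_left (by linarith)]; ring⟩
    · right; left
      exact ⟨h', h, rfl, by rw [min_eq_right (by linarith)]; ring⟩
  · have e : min (2 * a) (1 - 2 * a) = 1 - 2 * a := min_eq_right (by linarith)
    rw [e]
    rcases le_total a (3 / 8) with h' | h'
    · right; right; left
      exact ⟨h, h', rfl, by rw [min_eq_right (by linarith)]; ring⟩
    · right; right; right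
      exact ⟨h', rfl, by rw [min_eq_left (by linarith)]; ring⟩

lemma KK_fold (a b : ℝ) (ha0 : 0 ≤ a) (ha1 : a ≤ 1 / 2) (hb0 : 0 ≤ b) (hb1 : b ≤ 1 / 2) :
    -(111 / 100) ≤ KK a (min (2 * a) (1 - 2 * a))
      (min (2 * min (2 * a) (1 - 2 * a)) (1 - 2 * min (2 * a) (1 - 2 * a)))
      b (min (2 * b) (1 - 2 * b))
      (min (2 * min (2 * b) (1 - 2 * b)) (1 - 2 * min (2 * b) (1 - 2 * b))) := by
  rcases fold_cases a with ⟨h2, e1, e2⟩ | ⟨h1, h2, e1, e2⟩ | ⟨h1, h2, e1, e2⟩ | ⟨h1, e1, e2⟩ <;>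
  rcases fold_cases b with ⟨k2, f1, f2⟩ | ⟨k1, k2, f1, f2⟩ | ⟨k1, k2, f1, f2⟩ | ⟨k1, f1, f2⟩ <;>
  rw [e2, f2, e1, f1]
  · exact KK_cell_0_0 a b (by linarith) (by linarith) (by linarith) (by linarith)
  · rw [KK_symm]; exact KK_cell_1_0 b a (by linarith) (by linarith) (by linarith) (by linarith)
  · rw [KK_symm]; exact KK_cell_2_0 b a (by linarith) (by linarith) (by linarith) (by linarith)
  · rw [KK_symm]; exact KK_cell_3_0 b a (by linarith) (by linarith) (by linarith) (by linarith)
  · exact KK_cell_1_0 a b (by linarith) (by linarith) (by linarith) (by linarith)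
  · exact KK_cell_1_1 a b (by linarith) (by linarith) (by linarith) (by linarith)
  · rw [KK_symm]; exact KK_cell_2_1 b a (by linarith) (by linarith) (by linarith) (by linarith)
  · rw [KK_symm]; exact KK_cell_3_1 b a (by linarith) (by linarith) (by linarith) (by linarith)
  · exact KK_cell_2_0 a b (by linarith) (by linarith) (by linarith) (by linarith)
  · exact KK_cell_2_1 a b (by linarith) (by linarith) (by linarith) (by linarith)
  · exact KK_cell_2_2 a b (by linarith) (by linarith) (by linarith) (by linarith)
  · rw [KK_symm]; exact KK_cell_3_2 b a (by linarith) (by linarith) (by linarith) (by linarith)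
  · exact KK_cell_3_0 a b (by linarith) (by linarith) (by linarith) (by linarith)
  · exact KK_cell_3_1 a b (by linarith) (by linarith) (by linarith) (by linarith)
  · exact KK_cell_3_2 a b (by linarith) (by linarith) (by linarith) (by linarith)
  · exact KK_cell_3_3 a b (by linarith) (by linarith) (by linarith) (by linarith)

lemma KK_tau (x y : ℝ) :
    -(111 / 100) ≤ KK (tau x) (tau (2 * x)) (tau (2 * (2 * x)))
      (tau y) (tau (2 * y)) (tau (2 * (2 * y))) := by
  rw [tau_two_mul (2 * x), tau_two_mul x, tau_two_mul (2 * y), tau_two_mul y]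
  exact KK_fold _ _ (tau_nonneg x) (tau_le_half x) (tau_nonneg y) (tau_le_half y)

/-- Lebesgue measure on the unit interval. -/
def mu1 : Measure ℝ := volume.restrict (Set.Ico (0:ℝ) 1)

instance : IsProbabilityMeasure mu1 := ⟨by simp [mu1]⟩

lemma restrict_unitSq : (volume : Measure (ℝ × ℝ)).restrict unitSq = mu1.prod mu1 := by
  unfold unitSq mu1
  rw [Measure.prod_restrict]
  rfl

/-- One-dimensional Haar function. -/
def hh (j m : ℕ) (x : ℝ) : ℝ :=
  if (m:ℝ) ≤ 2 ^ j * x ∧ 2 ^ j * x < m + 1 / 2 then 1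
  else if (m:ℝ) + 1 / 2 ≤ 2 ^ j * x ∧ 2 ^ j * x < m + 1 then -1 else 0

lemma hh_measurable (j m : ℕ) : Measurable (hh j m) := by
  have hm : Measurable fun x : ℝ => 2 ^ j * x := by fun_prop
  unfold hh
  refine Measurable.ite ?_ measurable_const (Measurable.ite ?_ measurable_const measurable_const)
  · exact (measurableSet_le measurable_const hm).inter (measurableSet_lt hm measurable_const)
  · exact (measurableSet_le measurable_const hm).inter (measurableSet_lt hm measurable_const)

lemma hh_abs_le (j m : ℕ) (x : ℝ) : |hh j m x| ≤ 1 := by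
  unfold hh
  split_ifs <;> simp

lemma hh_eq_zero (j m : ℕ) (x : ℝ) (h : ¬ ((m:ℝ) ≤ 2 ^ j * x ∧ 2 ^ j * x < m + 1)) :
    hh j m x = 0 := by
  unfold hh
  rw [if_neg, if_neg]
  · rintro ⟨h1, h2⟩; exact h ⟨by linarith, h2⟩
  · rintro ⟨h1, h2⟩; exact h ⟨h1, by linarith⟩

lemma nat_le_iff_of_mem (K m : ℕ) (y : ℝ) (h1 : (m:ℝ) ≤ y) (h2 : y < m + 1) :
    (K:ℝ) ≤ y ↔ (K:ℝ) ≤ m := by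
  constructor
  · intro h
    have : (K:ℝ) < ((m + 1 : ℕ) : ℝ) := by push_cast; linarith
    have := Nat.cast_lt.1 this
    exact_mod_cast Nat.lt_succ_iff.1 this
  · intro h; linarith

lemma hh_mul_of_lt (j j' m m' : ℕ) (hj : j < j') (x : ℝ) :
    hh j m x * hh j' m' x = hh j m (m' / 2 ^ j') * hh j' m' x := by
  by_cases h : (m':ℝ) ≤ 2 ^ j' * x ∧ 2 ^ j' * x < m' + 1
  · congr 1
    obtain ⟨d, rfl⟩ : ∃ d, j' = j + 1 + d := ⟨j' - (j + 1), by omega⟩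
    have hpos : (0:ℝ) < 2 ^ (d + 1) := by positivity
    set y := 2 ^ (j + 1 + d) * x with hy
    have e1 : 2 ^ j * x = y / 2 ^ (d + 1) := by
      rw [hy, eq_div_iff hpos.ne']; ring
    have e2 : (2:ℝ) ^ j * (m' / 2 ^ (j + 1 + d)) = m' / 2 ^ (d + 1) := by
      rw [show j + 1 + d = j + (d + 1) by ring, pow_add]
      field_simp
    have k1 := nat_le_iff_of_mem (m * 2 ^ (d + 1)) m' y h.1 h.2
    have k2 := nat_le_iff_of_mem (m * 2 ^ (d + 1) + 2 ^ d) m' y h.1 h.2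
    have k3 := nat_le_iff_of_mem (m * 2 ^ (d + 1) + 2 ^ (d + 1)) m' y h.1 h.2
    push_cast at k1 k2 k3
    have l1 : (m:ℝ) ≤ y / 2 ^ (d + 1) ↔ (m:ℝ) ≤ m' / 2 ^ (d + 1) := by
      rw [le_div_iff₀ hpos, le_div_iff₀ hpos, k1]
    have l2 : (m:ℝ) + 1 / 2 ≤ y / 2 ^ (d + 1) ↔ (m:ℝ) + 1 / 2 ≤ m' / 2 ^ (d + 1) := by
      rw [le_div_iff₀ hpos, le_div_iff₀ hpos,
        show ((m:ℝ) + 1 / 2) * 2 ^ (d + 1) = m * 2 ^ (d + 1) + 2 ^ d by ring, k2]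
    have l3 : (m:ℝ) + 1 ≤ y / 2 ^ (d + 1) ↔ (m:ℝ) + 1 ≤ m' / 2 ^ (d + 1) := by
      rw [le_div_iff₀ hpos, le_div_iff₀ hpos,
        show ((m:ℝ) + 1) * 2 ^ (d + 1) = m * 2 ^ (d + 1) + 2 ^ (d + 1) by ring, k3]
    unfold hh
    rw [e1, e2]
    simp only [← not_le, l1, l2, l3]
  · rw [hh_eq_zero j' m' x h]; simp

lemma hh_mul_of_ne (j m m' : ℕ) (hm : m ≠ m') (x : ℝ) : hh j m x * hh j m' x = 0 := by
  by_contra hne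
  have h1 : (m:ℝ) ≤ 2 ^ j * x ∧ 2 ^ j * x < m + 1 := by
    by_contra h; exact hne (by rw [hh_eq_zero j m x h]; simp)
  have h2 : (m':ℝ) ≤ 2 ^ j * x ∧ 2 ^ j * x < m' + 1 := by
    by_contra h; exact hne (by rw [hh_eq_zero j m' x h]; simp)
  have a1 := (nat_le_iff_of_mem m m' _ h2.1 h2.2).1 h1.1
  have a2 := (nat_le_iff_of_mem m' m _ h1.1 h1.2).1 h2.1
  exact hm (by exact_mod_cast le_antisymm a1 a2)

lemma int_hh (f : ℝ → ℝ) (hf : Integrable f mu1) (j m : ℕ) (hm : m < 2 ^ j) :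
    ∫ x, f x * hh j m x ∂mu1 =
      (∫ x in (m / 2 ^ j : ℝ)..((m + 1 / 2) / 2 ^ j : ℝ), f x)
      - ∫ x in ((m + 1 / 2) / 2 ^ j : ℝ)..((m + 1) / 2 ^ j : ℝ), f x := by
  have hpos : (0:ℝ) < 2 ^ j := by positivity
  have hm' : (m:ℝ) + 1 ≤ 2 ^ j := by exact_mod_cast hm
  have h0 : (0:ℝ) ≤ m / 2 ^ j := by positivity
  have h1 : (m / 2 ^ j : ℝ) ≤ (m + 1 / 2) / 2 ^ j := by gcongr; linarith
  have h2 : ((m + 1 / 2) / 2 ^ j : ℝ) ≤ (m + 1) / 2 ^ j := by gcongr; norm_num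
  have h3 : ((m + 1) / 2 ^ j : ℝ) ≤ 1 := by rw [div_le_one hpos]; exact hm'
  have key : ∀ x, f x * hh j m x =
      (Set.Ico (m / 2 ^ j : ℝ) ((m + 1 / 2) / 2 ^ j)).indicator f x
      - (Set.Ico ((m + 1 / 2) / 2 ^ j : ℝ) ((m + 1) / 2 ^ j)).indicator f x := by
    intro x
    simp only [hh, Set.indicator, Set.mem_Ico, div_le_iff₀' hpos, lt_div_iff₀' hpos]
    split_ifs with a b c
    · linarith [a.2, b.1]
    · ring
    · ring
    · ring
  simp_rw [key]
  rw [integral_sub (hf.indicator measurableSet_Ico) (hf.indicator measurableSet_Ico)]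
  rw [integral_indicator measurableSet_Ico, integral_indicator measurableSet_Ico]
  unfold mu1
  rw [Measure.restrict_restrict measurableSet_Ico, Measure.restrict_restrict measurableSet_Ico,
    Set.inter_eq_left.2 (Set.Ico_subset_Ico h0 (h2.trans h3)),
    Set.inter_eq_left.2 (Set.Ico_subset_Ico (h0.trans h1) h3),
    integral_Ico_eq_integral_Ioc, integral_Ico_eq_integral_Ioc,
    intervalIntegral.integral_of_le h1, intervalIntegral.integral_of_le h2]

lemma int_hh_one (j m : ℕ) (hm : m < 2 ^ j) : ∫ x, hh j m x ∂mu1 = 0 := by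
  have := int_hh (fun _ => 1) (integrable_const _) j m hm
  simp only [one_mul] at this
  rw [this]
  simp only [intervalIntegral.integral_const, smul_eq_mul]
  ring

lemma int_hh_id (j m : ℕ) (hm : m < 2 ^ j) :
    ∫ x, x * hh j m x ∂mu1 = -(1 / 4) * ((1 / 2) ^ j) ^ 2 := by
  have hi : Integrable (fun x : ℝ => x) mu1 := by
    unfold mu1
    exact (continuous_id.integrableOn_Icc (a := (0:ℝ)) (b := 1)).mono_set Set.Ico_subset_Icc_self
  rw [int_hh (fun x => x) hi j m hm]
  simp only [integral_id]
  rw [one_div_pow]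
  field_simp
  ring

lemma int_hh_sq (j m : ℕ) (hm : m < 2 ^ j) :
    ∫ x, hh j m x * hh j m x ∂mu1 = (1 / 2) ^ j := by
  have hb : Integrable (hh j m) mu1 :=
    Integrable.of_bound (hh_measurable j m).aestronglyMeasurable 1
      (Filter.Eventually.of_forall fun x => hh_abs_le j m x)
  have hpos : (0:ℝ) < 2 ^ j := by positivity
  have h1 : (m / 2 ^ j : ℝ) ≤ (m + 1 / 2) / 2 ^ j := by gcongr; linarith
  have h2 : ((m + 1 / 2) / 2 ^ j : ℝ) ≤ (m + 1) / 2 ^ j := by gcongr; norm_num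
  rw [int_hh (hh j m) hb j m hm, intervalIntegral.integral_of_le h1,
    intervalIntegral.integral_of_le h2, ← integral_Ico_eq_integral_Ioc,
    ← integral_Ico_eq_integral_Ioc]
  have A1 : ∫ x in Set.Ico (m / 2 ^ j : ℝ) ((m + 1 / 2) / 2 ^ j), hh j m x
      = ∫ x in Set.Ico (m / 2 ^ j : ℝ) ((m + 1 / 2) / 2 ^ j), (1:ℝ) := by
    refine setIntegral_congr_fun measurableSet_Ico ?_
    intro x hx
    simp only [Set.mem_Ico, div_le_iff₀' hpos, lt_div_iff₀' hpos] at hx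
    simp only [hh]
    rw [if_pos hx]
  have A2 : ∫ x in Set.Ico ((m + 1 / 2) / 2 ^ j : ℝ) ((m + 1) / 2 ^ j), hh j m x
      = ∫ x in Set.Ico ((m + 1 / 2) / 2 ^ j : ℝ) ((m + 1) / 2 ^ j), (-1:ℝ) := by
    refine setIntegral_congr_fun measurableSet_Ico ?_
    intro x hx
    simp only [Set.mem_Ico, div_le_iff₀' hpos, lt_div_iff₀' hpos] at hx
    simp only [hh]
    rw [if_neg (by rintro ⟨a, b⟩; linarith [hx.1]), if_pos hx]
  rw [A1, A2]
  simp only [integral_const, smul_eq_mul, MeasurableSet.univ, measureReal_restrict_apply,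
      Set.univ_inter, Real.volume_real_Ico_of_le h1, Real.volume_real_Ico_of_le h2]
  rw [one_div_pow]
  field_simp
  ring

lemma int_hh_mul (j m j' m' : ℕ) (hm : m < 2 ^ j) (hm' : m' < 2 ^ j') (h : (j, m) ≠ (j', m')) :
    ∫ x, hh j m x * hh j' m' x ∂mu1 = 0 := by
  rcases lt_trichotomy j j' with hj | hj | hj
  · simp_rw [hh_mul_of_lt j j' m m' hj]
    rw [integral_const_mul, int_hh_one j' m' hm', mul_zero]
  · subst hj
    have : m ≠ m' := fun e => h (by rw [e])
    simp_rw [hh_mul_of_ne j m m' this]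
    simp
  · simp_rw [mul_comm (hh j m _), hh_mul_of_lt j' j m' m hj]
    rw [integral_const_mul, int_hh_one j m hm, mul_zero]

lemma int_step (p u v : ℝ) (huv : u ≤ v) :
    ∫ x in u..v, (if p < x then (1:ℝ) else 0) = max 0 (v - max u p) := by
  rw [intervalIntegral.integral_of_le huv]
  have : (fun x : ℝ => if p < x then (1:ℝ) else 0) = (Set.Ioi p).indicator (fun _ => (1:ℝ)) := by
    ext x; simp [Set.indicator]
  rw [this, setIntegral_indicator measurableSet_Ioi, Set.Ioc_inter_Ioi]
  simp [Measure.real, ENNReal.toReal_ofReal', max_comm]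

lemma step_integrable (p : ℝ) : Integrable (fun x : ℝ => if p < x then (1:ℝ) else 0) mu1 := by
  refine Integrable.of_bound (C := 1) ?_ ?_
  · exact (Measurable.ite measurableSet_Ioi measurable_const measurable_const).aestronglyMeasurable
  · refine Filter.Eventually.of_forall fun x => ?_
    split_ifs <;> simp

lemma int_hh_step (p : ℝ) (hp : 0 ≤ p) (j m : ℕ) (hm : m < 2 ^ j) :
    ∫ x, (if p < x then (1:ℝ) else 0) * hh j m x ∂mu1 =
      if ⌊2 ^ j * p⌋₊ = m then -((1 / 2) ^ j * tau (2 ^ j * p)) else 0 := by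
  have hpos : (0:ℝ) < 2 ^ j := by positivity
  have h1 : (m / 2 ^ j : ℝ) ≤ (m + 1 / 2) / 2 ^ j := by gcongr; linarith
  have h2 : ((m + 1 / 2) / 2 ^ j : ℝ) ≤ (m + 1) / 2 ^ j := by gcongr; norm_num
  rw [int_hh _ (step_integrable p) j m hm, int_step _ _ _ h1, int_step _ _ _ h2]
  obtain ⟨y, hy⟩ : ∃ y, y = 2 ^ j * p := ⟨_, rfl⟩
  have hp' : p = y / 2 ^ j := by rw [hy]; field_simp
  have hy0 : 0 ≤ y := by rw [hy]; positivity
  have scale : ∀ a b c : ℝ, max 0 (a / 2 ^ j - max (b / 2 ^ j) (c / 2 ^ j))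
      = (1 / 2) ^ j * max 0 (a - max b c) := by
    intro a b c
    have hq : (0:ℝ) ≤ (1 / 2) ^ j := by positivity
    have hd : ∀ z : ℝ, z / 2 ^ j = (1 / 2) ^ j * z := by
      intro z; rw [one_div_pow]; field_simp
    rw [mul_max_of_nonneg _ _ hq, mul_sub, mul_max_of_nonneg _ _ hq, hd, hd, hd, mul_zero]
  rw [← hy, hp', scale, scale]
  simp only [Nat.floor_eq_iff hy0]
  have hL : max 0 ((m:ℝ) + 1 / 2 - max (m:ℝ) y) - max 0 ((m:ℝ) + 1 - max ((m:ℝ) + 1 / 2) y)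
      = if (m:ℝ) ≤ y ∧ y < m + 1 then - tau y else 0 := by
    split_ifs with h
    · have hf : Int.fract y = y - m := by
        rw [Int.fract_eq_iff]
        exact ⟨by linarith [h.1], by linarith [h.2], m, by push_cast; ring⟩
      unfold tau
      rw [hf, max_eq_right h.1]
      rcases le_total y (m + 1 / 2) with h' | h'
      · rw [max_eq_left h', max_eq_right (by linarith), max_eq_right (by linarith),
          min_eq_left (by linarith)]
        ring
      · rw [max_eq_right h', max_eq_left (by linarith), max_eq_right (by linarith),
          min_eq_right (by linarith)]
        ring
    · rcases lt_or_ge y m with h' | h'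
      · rw [max_eq_left h'.le, max_eq_left (show y ≤ (m:ℝ) + 1 / 2 by linarith),
          max_eq_right (by linarith), max_eq_right (by linarith)]
        ring
      · have h'' : (m:ℝ) + 1 ≤ y := by
          by_contra hc; exact h ⟨h', by linarith⟩
        rw [max_eq_right h', max_eq_right (show (m:ℝ) + 1 / 2 ≤ y by linarith),
          max_eq_left (by linarith), max_eq_left (by linarith)]
        ring
  rw [← mul_sub, hL]
  split_ifs <;> ring

lemma bessel {α ι : Type*} [MeasurableSpace α] (μ : Measure α) [DecidableEq ι] (s : Finset ι)
    (f : α → ℝ) (g : ι → α → ℝ) (lam : ι → ℝ)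
    (hff : Integrable (fun x => f x ^ 2) μ)
    (hfg : ∀ i ∈ s, Integrable (fun x => f x * g i x) μ)
    (hgg : ∀ i ∈ s, ∀ j ∈ s, Integrable (fun x => g i x * g j x) μ)
    (horth : ∀ i ∈ s, ∀ j ∈ s, i ≠ j → ∫ x, g i x * g j x ∂μ = 0)
    (hlam : ∀ i ∈ s, ∫ x, g i x * g i x ∂μ = lam i)
    (hpos : ∀ i ∈ s, 0 < lam i) :
    ∑ i ∈ s, (∫ x, f x * g i x ∂μ) ^ 2 / lam i ≤ ∫ x, f x ^ 2 ∂μ := by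
  set c : ι → ℝ := fun i => (∫ x, f x * g i x ∂μ) / lam i with hc
  have e : ∀ x, (f x - ∑ i ∈ s, c i * g i x) ^ 2 =
      f x ^ 2 - 2 * ∑ i ∈ s, c i * (f x * g i x)
        + ∑ i ∈ s, ∑ j ∈ s, c i * c j * (g i x * g j x) := by
    intro x
    rw [sub_sq, pow_two (∑ i ∈ s, c i * g i x), Finset.sum_mul_sum]
    have h1 : f x * ∑ i ∈ s, c i * g i x = ∑ i ∈ s, c i * (f x * g i x) := by
      rw [Finset.mul_sum]; exact Finset.sum_congr rfl fun i _ => by ring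
    have h2 : ∑ i ∈ s, ∑ j ∈ s, c i * g i x * (c j * g j x)
        = ∑ i ∈ s, ∑ j ∈ s, c i * c j * (g i x * g j x) :=
      Finset.sum_congr rfl fun i _ => Finset.sum_congr rfl fun j _ => by ring
    rw [h2, mul_assoc, h1]
  have i1 : Integrable (fun x => ∑ i ∈ s, c i * (f x * g i x)) μ :=
    integrable_finsetSum _ fun i hi => (hfg i hi).const_mul _
  have i2 : Integrable (fun x => ∑ i ∈ s, ∑ j ∈ s, c i * c j * (g i x * g j x)) μ :=
    integrable_finsetSum _ fun i hi => integrable_finsetSum _ fun j hj =>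
      (hgg i hi j hj).const_mul _
  have h0 : 0 ≤ ∫ x, (f x - ∑ i ∈ s, c i * g i x) ^ 2 ∂μ :=
    integral_nonneg fun x => sq_nonneg _
  simp_rw [e] at h0
  have i3 : Integrable (fun x => f x ^ 2 - 2 * ∑ i ∈ s, c i * (f x * g i x)) μ :=
    hff.sub (i1.const_mul 2)
  rw [integral_add i3 i2, integral_sub hff (i1.const_mul 2),
    integral_const_mul, integral_finsetSum _ fun i hi => (hfg i hi).const_mul _,
    integral_finsetSum _ fun i hi => integrable_finsetSum _ fun j hj =>
      (hgg i hi j hj).const_mul _] at h0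
  have t1 : ∑ i ∈ s, ∫ x, c i * (f x * g i x) ∂μ
      = ∑ i ∈ s, (∫ x, f x * g i x ∂μ) ^ 2 / lam i := by
    refine Finset.sum_congr rfl fun i hi => ?_
    rw [integral_const_mul]; simp only [hc]; ring
  have t2 : ∑ i ∈ s, ∫ x, ∑ j ∈ s, c i * c j * (g i x * g j x) ∂μ
      = ∑ i ∈ s, (∫ x, f x * g i x ∂μ) ^ 2 / lam i := by
    refine Finset.sum_congr rfl fun i hi => ?_
    rw [integral_finsetSum _ fun j hj => (hgg i hi j hj).const_mul _,
      Finset.sum_eq_single_of_mem i hi]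
    · rw [integral_const_mul, hlam i hi]
      have := (hpos i hi).ne'
      simp only [hc]; field_simp
    · intro j hj hji
      rw [integral_const_mul, horth i hi j hj (Ne.symm hji), mul_zero]
  rw [t1, t2] at h0
  linarith

/-- Step function. -/
def st (p x : ℝ) : ℝ := if p < x then 1 else 0

lemma st_measurable (p : ℝ) : Measurable (st p) :=
  Measurable.ite measurableSet_Ioi measurable_const measurable_const

lemma st_abs_le (p x : ℝ) : |st p x| ≤ 1 := by
  unfold st; split_ifs <;> simp

lemma disc_eq (N : ℕ) (p : Fin N → ℝ × ℝ) (hp : ∀ i, p i ∈ unitSq) (x : ℝ × ℝ) :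
    disc N p x = (∑ i : Fin N, st (p i).1 x.1 * st (p i).2 x.2) - N * (x.1 * x.2) := by
  unfold disc st
  rw [mul_assoc]
  congr 1
  refine Finset.sum_congr rfl fun i _ => ?_
  have h := hp i
  simp only [unitSq, Set.mem_prod, Set.mem_Ico] at h
  by_cases a : (p i).1 < x.1 <;> by_cases b : (p i).2 < x.2 <;> simp [a, b, h.1.1, h.2.1]

lemma bdd_integrable {α : Type*} [MeasurableSpace α] (μ : Measure α) [IsFiniteMeasure μ]
    (f : α → ℝ) (hf : Measurable f) (C : ℝ) (h : ∀ᵐ x ∂μ, |f x| ≤ C) : Integrable f μ :=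
  Integrable.of_bound hf.aestronglyMeasurable C h

lemma ae_mem_unit : ∀ᵐ x ∂mu1, x ∈ Set.Ico (0:ℝ) 1 := by
  unfold mu1; exact ae_restrict_mem measurableSet_Ico

lemma ae_mem_unitSq : ∀ᵐ x ∂(mu1.prod mu1), x ∈ unitSq := by
  rw [← restrict_unitSq]
  exact ae_restrict_mem (measurableSet_Ico.prod measurableSet_Ico)

lemma disc_measurable (N : ℕ) (p : Fin N → ℝ × ℝ) (hp : ∀ i, p i ∈ unitSq) :
    Measurable (disc N p) := by
  have : disc N p = fun x : ℝ × ℝ =>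
    (∑ i : Fin N, st (p i).1 x.1 * st (p i).2 x.2) - N * (x.1 * x.2) := by
    ext x; exact disc_eq N p hp x
  rw [this]
  refine Measurable.sub (Finset.measurable_sum _ fun i _ => ?_) (by fun_prop)
  exact ((st_measurable _).comp measurable_fst).mul ((st_measurable _).comp measurable_snd)

lemma disc_abs_le (N : ℕ) (p : Fin N → ℝ × ℝ) (hp : ∀ i, p i ∈ unitSq) (x : ℝ × ℝ)
    (hx : x ∈ unitSq) : |disc N p x| ≤ 2 * N := by
  rw [disc_eq N p hp]
  simp only [unitSq, Set.mem_prod, Set.mem_Ico] at hx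
  have h1 : |∑ i : Fin N, st (p i).1 x.1 * st (p i).2 x.2| ≤ N := by
    refine (Finset.abs_sum_le_sum_abs _ _).trans ?_
    calc ∑ i : Fin N, |st (p i).1 x.1 * st (p i).2 x.2| ≤ ∑ i : Fin N, (1:ℝ) := by
          refine Finset.sum_le_sum fun i _ => ?_
          rw [abs_mul]
          exact mul_le_one₀ (st_abs_le _ _) (abs_nonneg _) (st_abs_le _ _)
      _ = N := by simp
  have h2 : |(N:ℝ) * (x.1 * x.2)| ≤ N := by
    have h3 : 0 ≤ x.1 * x.2 := mul_nonneg hx.1.1 hx.2.1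
    have h4 : x.1 * x.2 ≤ 1 := mul_le_one₀ hx.1.2.le hx.2.1 hx.2.2.le
    rw [abs_of_nonneg (by positivity)]
    exact mul_le_of_le_one_right (by positivity) h4
  have := abs_sub (∑ i : Fin N, st (p i).1 x.1 * st (p i).2 x.2) ((N:ℝ) * (x.1 * x.2))
  linarith

/-- Two-dimensional Haar function. -/
def HH (b : (_ : ℕ × ℕ) × (ℕ × ℕ)) (x : ℝ × ℝ) : ℝ := hh b.1.1 b.2.1 x.1 * hh b.1.2 b.2.2 x.2

lemma HH_measurable (b : (_ : ℕ × ℕ) × (ℕ × ℕ)) : Measurable (HH b) :=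
  ((hh_measurable _ _).comp measurable_fst).mul ((hh_measurable _ _).comp measurable_snd)

lemma HH_abs_le (b : (_ : ℕ × ℕ) × (ℕ × ℕ)) (x : ℝ × ℝ) : |HH b x| ≤ 1 := by
  unfold HH
  rw [abs_mul]
  exact mul_le_one₀ (hh_abs_le _ _ _) (abs_nonneg _) (hh_abs_le _ _ _)

/-- Normalised contribution of a point. -/
def VV (J : ℕ × ℕ) (q : ℝ × ℝ) : ℝ := tau (2 ^ J.1 * q.1) * tau (2 ^ J.2 * q.2)

lemma VV_nonneg (J : ℕ × ℕ) (q : ℝ × ℝ) : 0 ≤ VV J q := mul_nonneg (tau_nonneg _) (tau_nonneg _)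

/-- Area of a dyadic box. -/
def AA (J : ℕ × ℕ) : ℝ := (1 / 2) ^ J.1 * (1 / 2) ^ J.2

lemma AA_pos (J : ℕ × ℕ) : 0 < AA J := by unfold AA; positivity

/-- The index of the dyadic box containing a point. -/
def bx (J : ℕ × ℕ) (q : ℝ × ℝ) : ℕ × ℕ := (⌊2 ^ J.1 * q.1⌋₊, ⌊2 ^ J.2 * q.2⌋₊)

lemma coeff (N : ℕ) (p : Fin N → ℝ × ℝ) (hp : ∀ i, p i ∈ unitSq) (J m : ℕ × ℕ)
    (hm1 : m.1 < 2 ^ J.1) (hm2 : m.2 < 2 ^ J.2) :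
    ∫ x, disc N p x * HH ⟨J, m⟩ x ∂(mu1.prod mu1) =
      AA J * ((∑ i : Fin N, if bx J (p i) = m then VV J (p i) else 0) - N * AA J / 16) := by
  have e : ∀ x : ℝ × ℝ, disc N p x * HH ⟨J, m⟩ x =
      (∑ i : Fin N, (st (p i).1 x.1 * hh J.1 m.1 x.1) * (st (p i).2 x.2 * hh J.2 m.2 x.2))
      - N * ((x.1 * hh J.1 m.1 x.1) * (x.2 * hh J.2 m.2 x.2)) := by
    intro x
    rw [disc_eq N p hp, sub_mul, Finset.sum_mul]
    unfold HH
    congr 1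
    · exact Finset.sum_congr rfl fun i _ => by ring
    · ring
  simp_rw [e]
  have a1 : ∀ (j k : ℕ) (q : ℝ), Integrable (fun x => st q x * hh j k x) mu1 := by
    intro j k q
    refine bdd_integrable _ _ ((st_measurable q).mul (hh_measurable j k)) 1
      (Filter.Eventually.of_forall fun x => ?_)
    rw [abs_mul]
    exact mul_le_one₀ (st_abs_le _ _) (abs_nonneg _) (hh_abs_le _ _ _)
  have a2 : ∀ (j k : ℕ), Integrable (fun x => x * hh j k x) mu1 := by
    intro j k
    refine bdd_integrable _ _ (measurable_id.mul (hh_measurable j k)) 1 ?_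
    filter_upwards [ae_mem_unit] with x hx
    rw [abs_mul]
    refine mul_le_one₀ ?_ (abs_nonneg _) (hh_abs_le _ _ _)
    rw [abs_of_nonneg hx.1]; exact hx.2.le
  rw [integral_sub (integrable_finsetSum _ fun i _ => (a1 _ _ _).mul_prod (a1 _ _ _))
    (((a2 _ _).mul_prod (a2 _ _)).const_mul _),
    integral_finsetSum _ fun i _ => (a1 _ _ _).mul_prod (a1 _ _ _), integral_const_mul,
    integral_prod_mul (fun x => x * hh J.1 m.1 x) (fun x => x * hh J.2 m.2 x),
    int_hh_id _ _ hm1, int_hh_id _ _ hm2, mul_sub, Finset.mul_sum]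
  congr 1
  · refine Finset.sum_congr rfl fun i _ => ?_
    have h := hp i
    simp only [unitSq, Set.mem_prod, Set.mem_Ico] at h
    rw [integral_prod_mul (fun x => st (p i).1 x * hh J.1 m.1 x)
      (fun x => st (p i).2 x * hh J.2 m.2 x)]
    unfold st
    rw [int_hh_step _ h.1.1 _ _ hm1, int_hh_step _ h.2.1 _ _ hm2]
    unfold bx VV AA
    by_cases c1 : ⌊2 ^ J.1 * (p i).1⌋₊ = m.1 <;> by_cases c2 : ⌊2 ^ J.2 * (p i).2⌋₊ = m.2 <;>
      simp [c1, c2, Prod.ext_iff]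
    ring
  · unfold AA; ring

/-- All dyadic boxes of a given shape. -/
def boxes (J : ℕ × ℕ) : Finset (ℕ × ℕ) := Finset.range (2 ^ J.1) ×ˢ Finset.range (2 ^ J.2)

lemma bx_mem (J : ℕ × ℕ) (q : ℝ × ℝ) (hq : q ∈ unitSq) : bx J q ∈ boxes J := by
  simp only [unitSq, Set.mem_prod, Set.mem_Ico] at hq
  simp only [bx, boxes, Finset.mem_product, Finset.mem_range]
  constructor
  · rw [Nat.floor_lt (mul_nonneg (by positivity) hq.1.1)]
    push_cast
    exact mul_lt_of_lt_one_right (by positivity) hq.1.2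
  · rw [Nat.floor_lt (mul_nonneg (by positivity) hq.2.1)]
    push_cast
    exact mul_lt_of_lt_one_right (by positivity) hq.2.2

lemma shape_lower (N : ℕ) (p : Fin N → ℝ × ℝ) (hp : ∀ i, p i ∈ unitSq) (J : ℕ × ℕ) :
    (N * AA J / 16) ^ 2 + AA J * ∑ i : Fin N, (VV J (p i) ^ 2 - 2 * (N * AA J / 16) * VV J (p i))
    ≤ ∑ m ∈ boxes J,
      AA J * ((∑ i : Fin N, if bx J (p i) = m then VV J (p i) else 0) - N * AA J / 16) ^ 2 := by
  set c := N * AA J / 16 with hc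
  have h1 : ∀ m ∈ boxes J,
      AA J * (c ^ 2 + ∑ i : Fin N,
        (if bx J (p i) = m then VV J (p i) ^ 2 - 2 * c * VV J (p i) else 0))
      ≤ AA J * ((∑ i : Fin N, if bx J (p i) = m then VV J (p i) else 0) - c) ^ 2 := by
    intro m _
    refine mul_le_mul_of_nonneg_left ?_ (AA_pos J).le
    have h2 : ∑ i : Fin N, (if bx J (p i) = m then VV J (p i) else 0) ^ 2
        ≤ (∑ i : Fin N, if bx J (p i) = m then VV J (p i) else 0) ^ 2 := by
      apply Finset.sum_sq_le_sq_sum_of_nonneg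
      intro i _
      split_ifs
      · exact VV_nonneg _ _
      · exact le_rfl
    have h3 : ∑ i : Fin N, (if bx J (p i) = m then VV J (p i) ^ 2 - 2 * c * VV J (p i) else 0)
        = ∑ i : Fin N, (if bx J (p i) = m then VV J (p i) else 0) ^ 2
          - 2 * c * ∑ i : Fin N, (if bx J (p i) = m then VV J (p i) else 0) := by
      rw [Finset.mul_sum, ← Finset.sum_sub_distrib]
      refine Finset.sum_congr rfl fun i _ => ?_
      split_ifs <;> ring
    rw [h3]
    nlinarith [h2]
  refine le_trans (le_of_eq ?_) (Finset.sum_le_sum h1)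
  rw [← Finset.mul_sum, Finset.sum_add_distrib, Finset.sum_comm, Finset.sum_const, mul_add]
  congr 1
  · have : ((boxes J).card : ℝ) * AA J = 1 := by
      simp only [boxes, Finset.card_product, Finset.card_range, AA]
      push_cast
      rw [one_div_pow, one_div_pow]
      field_simp
    rw [nsmul_eq_mul]
    linear_combination (-c ^ 2) * this
  · congr 1
    refine Finset.sum_congr rfl fun i _ => ?_
    rw [Finset.sum_ite_eq, if_pos (bx_mem J _ (hp i))]

lemma lower1 (N : ℕ) (p : Fin N → ℝ × ℝ) (hp : ∀ i, p i ∈ unitSq) (S : Finset (ℕ × ℕ)) :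
    ∑ J ∈ S, ((N * AA J / 16) ^ 2
      + AA J * ∑ i : Fin N, (VV J (p i) ^ 2 - 2 * (N * AA J / 16) * VV J (p i)))
    ≤ ∫ x in unitSq, disc N p x ^ 2 := by
  rw [restrict_unitSq]
  refine le_trans ?_ (bessel (mu1.prod mu1) (S.sigma fun J => boxes J) (disc N p) HH
    (fun b => AA b.1) ?_ ?_ ?_ ?_ ?_ ?_)
  · rw [Finset.sum_sigma]
    refine Finset.sum_le_sum fun J _ => (shape_lower N p hp J).trans (le_of_eq ?_)
    refine Finset.sum_congr rfl fun m hm => ?_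
    simp only [boxes, Finset.mem_product, Finset.mem_range] at hm
    rw [coeff N p hp J m hm.1 hm.2]
    have := (AA_pos J).ne'
    field_simp
  · refine bdd_integrable _ _ ((disc_measurable N p hp).pow_const 2) ((2 * N) ^ 2) ?_
    filter_upwards [ae_mem_unitSq] with x hx
    rw [abs_pow]
    exact pow_le_pow_left₀ (abs_nonneg _) (disc_abs_le N p hp x hx) 2
  · intro b _
    refine bdd_integrable _ _ ((disc_measurable N p hp).mul (HH_measurable b)) (2 * N * 1) ?_
    filter_upwards [ae_mem_unitSq] with x hx
    rw [abs_mul]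
    exact mul_le_mul (disc_abs_le N p hp x hx) (HH_abs_le _ _) (abs_nonneg _) (by positivity)
  · intro b _ b' _
    refine bdd_integrable _ _ ((HH_measurable b).mul (HH_measurable b')) 1 ?_
    refine Filter.Eventually.of_forall fun x => ?_
    rw [abs_mul]
    exact mul_le_one₀ (HH_abs_le _ _) (abs_nonneg _) (HH_abs_le _ _)
  · rintro ⟨⟨J1, J2⟩, ⟨m1, m2⟩⟩ hb ⟨⟨K1, K2⟩, ⟨n1, n2⟩⟩ hb' hne
    simp only [boxes, Finset.mem_sigma, Finset.mem_product, Finset.mem_range] at hb hb'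
    have e : ∀ x : ℝ × ℝ, HH ⟨(J1, J2), (m1, m2)⟩ x * HH ⟨(K1, K2), (n1, n2)⟩ x
        = (hh J1 m1 x.1 * hh K1 n1 x.1) * (hh J2 m2 x.2 * hh K2 n2 x.2) := by
      intro x; unfold HH; ring
    simp_rw [e]
    rw [integral_prod_mul (fun x => hh J1 m1 x * hh K1 n1 x) (fun x => hh J2 m2 x * hh K2 n2 x)]
    by_cases h : (J1, m1) = (K1, n1)
    · have h' : (J2, m2) ≠ (K2, n2) := by
        intro h'
        simp only [Prod.mk.injEq] at h h'
        exact hne (by rw [h.1, h.2, h'.1, h'.2])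
      rw [int_hh_mul _ _ _ _ hb.2.2 hb'.2.2 h', mul_zero]
    · rw [int_hh_mul _ _ _ _ hb.2.1 hb'.2.1 h, zero_mul]
  · rintro ⟨⟨J1, J2⟩, ⟨m1, m2⟩⟩ hb
    simp only [boxes, Finset.mem_sigma, Finset.mem_product, Finset.mem_range] at hb
    have e : ∀ x : ℝ × ℝ, HH ⟨(J1, J2), (m1, m2)⟩ x * HH ⟨(J1, J2), (m1, m2)⟩ x
        = (hh J1 m1 x.1 * hh J1 m1 x.1) * (hh J2 m2 x.2 * hh J2 m2 x.2) := by
      intro x; unfold HH; ring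
    simp_rw [e]
    rw [integral_prod_mul (fun x => hh J1 m1 x * hh J1 m1 x) (fun x => hh J2 m2 x * hh J2 m2 x),
      int_hh_sq _ _ hb.2.1, int_hh_sq _ _ hb.2.2]
    rfl
  · intro b _; exact AA_pos _

lemma combo (F : ℕ × ℕ → ℝ) (I : ℝ) (hS : ∀ S : Finset (ℕ × ℕ), ∑ J ∈ S, F J ≤ I)
    (n p1 q1 p2 q2 : ℕ) (h1 : p1 + q1 = 1) (h2 : p2 + q2 = 2) :
    ∑ j ∈ Finset.range (n + 1), F (j, n - j)
      + ∑ j ∈ Finset.range (n + 1), F (j + p1, n - j + q1)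
      + ∑ j ∈ Finset.range (n + 1), F (j + p2, n - j + q2) ≤ I := by
  have hinj : ∀ p q : ℕ, Set.InjOn (fun j : ℕ => (j + p, n - j + q)) (Finset.range (n + 1)) := by
    intro p q a _ b _ hab
    simp only [Prod.mk.injEq] at hab
    omega
  have himg : ∀ p q : ℕ, ∑ j ∈ Finset.range (n + 1), F (j + p, n - j + q)
      = ∑ J ∈ (Finset.range (n + 1)).image (fun j : ℕ => (j + p, n - j + q)), F J := by
    intro p q
    rw [Finset.sum_image (hinj p q)]
  have hlev : ∀ p q : ℕ, ∀ J ∈ (Finset.range (n + 1)).image (fun j : ℕ => (j + p, n - j + q)),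
      J.1 + J.2 = n + (p + q) := by
    intro p q J hJ
    simp only [Finset.mem_image, Finset.mem_range] at hJ
    obtain ⟨j, hj, rfl⟩ := hJ
    simp only
    omega
  have h0 := himg 0 0
  simp only [add_zero] at h0
  have hlev0 := hlev 0 0
  simp only [add_zero] at hlev0
  rw [h0, himg p1 q1, himg p2 q2, ← Finset.sum_union, ← Finset.sum_union]
  · exact hS _
  · rw [Finset.disjoint_left]
    intro J hJ hJ'
    have a := hlev _ _ J hJ'
    rcases Finset.mem_union.1 hJ with h | h
    · have := hlev0 J h; omega
    · have := hlev _ _ J h; omega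
  · rw [Finset.disjoint_left]
    intro J hJ hJ'
    have a := hlev _ _ J hJ'
    have := hlev0 J hJ
    omega

lemma lower2 (k N : ℕ) (hN : N = 5 * 2 ^ k) (p : Fin N → ℝ × ℝ) (hp : ∀ i, p i ∈ unitSq) :
    ((k:ℝ) + 3) * (66328125 / 100000000 / 256) ≤ ∫ x in unitSq, disc N p x ^ 2 := by
  set I := ∫ x in unitSq, disc N p x ^ 2 with hI
  set F : ℕ × ℕ → ℝ := fun J => (N * AA J / 16) ^ 2
      + AA J * ∑ i : Fin N, (VV J (p i) ^ 2 - 2 * (N * AA J / 16) * VV J (p i)) with hF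
  have hS : ∀ S : Finset (ℕ × ℕ), ∑ J ∈ S, F J ≤ I := fun S => lower1 N p hp S
  have c1 := combo F I hS (k + 2) 1 0 2 0 rfl rfl
  have c2 := combo F I hS (k + 2) 1 0 1 1 rfl rfl
  have c3 := combo F I hS (k + 2) 1 0 0 2 rfl rfl
  have c4 := combo F I hS (k + 2) 0 1 2 0 rfl rfl
  have c5 := combo F I hS (k + 2) 0 1 1 1 rfl rfl
  have c6 := combo F I hS (k + 2) 0 1 0 2 rfl rfl
  have key : ∀ j ∈ Finset.range (k + 2 + 1), (66328125 / 100000000 / 256 : ℝ) ≤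
      F (j, k + 2 - j) + 1 / 2 * (F (j + 1, k + 2 - j + 0) + F (j + 0, k + 2 - j + 1))
      + 1 / 3 * (F (j + 1, k + 2 - j + 1) + F (j + 2, k + 2 - j + 0)
        + F (j + 0, k + 2 - j + 2)) := by
    intro j hj
    obtain ⟨l, hl⟩ : ∃ l, l = k + 2 - j := ⟨_, rfl⟩
    have hjl : j + l = k + 2 := by have := Finset.mem_range.1 hj; omega
    rw [← hl]
    set A0 : ℝ := (1 / 2) ^ (k + 2) with hA0
    have hA0pos : 0 < A0 := by positivity
    have hA : ∀ a b : ℕ, AA (j + a, l + b) = A0 * (1 / 2) ^ (a + b) := by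
      intro a b
      simp only [AA]
      rw [hA0, ← hjl]
      ring
    have hA' : AA (j, l) = A0 := by have := hA 0 0; simpa using this
    have hNA : (N:ℝ) * A0 = 5 / 4 := by
      rw [hN, hA0]
      push_cast
      rw [pow_add, one_div_pow]
      field_simp
      norm_num
    have main : F (j, l) + 1 / 2 * (F (j + 1, l + 0) + F (j + 0, l + 1))
      + 1 / 3 * (F (j + 1, l + 1) + F (j + 2, l + 0) + F (j + 0, l + 2))
      = 25 / 16 * (21 / 16) / 256 + ∑ i : Fin N, A0 / 256 *
        KK (tau (2 ^ j * (p i).1)) (tau (2 * (2 ^ j * (p i).1))) (tau (2 * (2 * (2 ^ j * (p i).1))))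
          (tau (2 ^ l * (p i).2)) (tau (2 * (2 ^ l * (p i).2)))
          (tau (2 * (2 * (2 ^ l * (p i).2)))) := by
      have e1 : ∀ (a : ℕ) (x : ℝ), (2:ℝ) ^ (a + 1) * x = 2 * (2 ^ a * x) := by intros; ring
      have e2 : ∀ (a : ℕ) (x : ℝ), (2:ℝ) ^ (a + 2) * x = 2 * (2 * (2 ^ a * x)) := by intros; ring
      have hNA2 : ∀ c : ℝ, (N:ℝ) * (A0 * c) = 5 / 4 * c := by intro c; rw [← mul_assoc, hNA]
      simp only [hF, hA, hA', hNA, hNA2, VV, e1, e2]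
      simp only [add_zero, zero_add, KK]
      simp only [Finset.mul_sum]
      have hsum : ∀ (a b c d e f : Fin N → ℝ) (A B C D E G : ℝ),
          A + ∑ i, a i + 1 / 2 * (B + ∑ i, b i + (C + ∑ i, c i))
            + 1 / 3 * (D + ∑ i, d i + (E + ∑ i, e i) + (G + ∑ i, f i))
          = (A + 1 / 2 * (B + C) + 1 / 3 * (D + E + G))
            + ∑ i, (a i + 1 / 2 * (b i + c i) + 1 / 3 * (d i + e i + f i)) := by
        intro a b c d e f A B C D E G
        simp only [Finset.sum_add_distrib, ← Finset.mul_sum]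
        ring
      rw [hsum]
      congr 1
      · norm_num
      · refine Finset.sum_congr rfl fun i _ => ?_
        ring
    rw [main]
    have hb : ∑ i : Fin N, A0 / 256 * (-(111 / 100)) ≤ ∑ i : Fin N, A0 / 256 *
        KK (tau (2 ^ j * (p i).1)) (tau (2 * (2 ^ j * (p i).1))) (tau (2 * (2 * (2 ^ j * (p i).1))))
          (tau (2 ^ l * (p i).2)) (tau (2 * (2 ^ l * (p i).2)))
          (tau (2 * (2 * (2 ^ l * (p i).2)))) := by
      refine Finset.sum_le_sum fun i _ => ?_
      exact mul_le_mul_of_nonneg_left (KK_tau _ _) (by positivity)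
    have hc : ∑ i : Fin N, A0 / 256 * (-(111 / 100)) = -(5 / 4) * (111 / 100) / 256 := by
      rw [Finset.sum_const, Finset.card_univ, Fintype.card_fin, nsmul_eq_mul]
      linear_combination (-(111 / 100) / 256) * hNA
    rw [hc] at hb
    linarith
  have hsum := Finset.sum_le_sum key
  simp only [Finset.sum_add_distrib, ← Finset.mul_sum, Finset.sum_const, Finset.card_range,
    nsmul_eq_mul] at hsum
  push_cast at hsum
  linarith

lemma lower3 (k : ℕ) (p : Fin (5 * 2 ^ k) → ℝ × ℝ) (hp : ∀ i, p i ∈ unitSq) :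
    0.061 ≤ L2disc (5 * 2 ^ k) p * Real.log ((5 * 2 ^ k : ℕ) : ℝ) ^ (-(1:ℝ) / 2) := by
  have h := lower2 k _ rfl p hp
  have hlog : Real.log ((5 * 2 ^ k : ℕ) : ℝ) ≤ (k + 3) * Real.log 2 := by
    have : (k + 3 : ℝ) * Real.log 2 = Real.log (2 ^ (k + 3)) := by
      rw [Real.log_pow]; push_cast; ring
    rw [this]
    apply Real.log_le_log (by positivity)
    push_cast
    rw [pow_add]
    have : (0:ℝ) < 2 ^ k := by positivity
    nlinarith
  have hlpos : 0 < Real.log ((5 * 2 ^ k : ℕ) : ℝ) := by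
    apply Real.log_pos
    have : (1:ℝ) ≤ 2 ^ k := one_le_pow₀ (by norm_num)
    push_cast
    linarith
  set L := Real.log ((5 * 2 ^ k : ℕ) : ℝ) with hL
  have e : L ^ (-(1:ℝ) / 2) = (Real.sqrt L)⁻¹ := by
    rw [neg_div, Real.rpow_neg hlpos.le, Real.sqrt_eq_rpow]
  have hsq : 0 < Real.sqrt L := Real.sqrt_pos.2 hlpos
  rw [e, ← div_eq_mul_inv, le_div_iff₀ hsq]
  unfold L2disc
  apply Real.le_sqrt_of_sq_le
  rw [mul_pow, Real.sq_sqrt hlpos.le]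
  refine le_trans ?_ h
  have h2 := Real.log_two_lt_d9
  have hk : (0:ℝ) ≤ k := by positivity
  nlinarith

/-- The van der Corput sequence. -/
def vdc : ℕ → ℝ
  | 0 => 0
  | n + 1 => vdc ((n + 1) / 2) / 2 + (((n + 1) % 2 : ℕ) : ℝ) / 2
decreasing_by omega

lemma vdc_zero : vdc 0 = 0 := by rw [vdc]

lemma vdc_even (i : ℕ) : vdc (2 * i) = vdc i / 2 := by
  rcases Nat.eq_zero_or_pos i with rfl | hi
  · simp [vdc_zero]
  · obtain ⟨k, hk⟩ : ∃ k, 2 * i = k + 1 := ⟨2 * i - 1, by omega⟩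
    rw [hk, vdc, ← hk]
    simp

lemma vdc_odd (i : ℕ) : vdc (2 * i + 1) = vdc i / 2 + 1 / 2 := by
  rw [vdc, show (2 * i + 1) / 2 = i by omega, show (2 * i + 1) % 2 = 1 by omega]
  simp

lemma vdc_mem (n : ℕ) : 0 ≤ vdc n ∧ vdc n < 1 := by
  induction n using Nat.strong_induction_on with
  | _ n ih =>
    rcases Nat.eq_zero_or_pos n with rfl | hn
    · simp [vdc_zero]
    · rcases Nat.even_or_odd' n with ⟨i, rfl | rfl⟩
      · have := ih i (by omega)
        rw [vdc_even]; constructor <;> linarith [this.1, this.2]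
      · have := ih i (by omega)
        rw [vdc_odd]; constructor <;> linarith [this.1, this.2]

lemma vdc_pos (n : ℕ) (hn : 0 < n) : 0 < vdc n := by
  induction n using Nat.strong_induction_on with
  | _ n ih =>
    rcases Nat.even_or_odd' n with ⟨i, rfl | rfl⟩
    · have := ih i (by omega) (by omega)
      rw [vdc_even]; linarith
    · have := vdc_mem i
      rw [vdc_odd]; linarith [this.1]

/-- Bounded measurable functions on `[0,1]`. -/
def Nice (f : ℝ → ℝ) : Prop := Measurable f ∧ ∃ C, ∀ u, 0 ≤ u → u ≤ 1 → |f u| ≤ C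

lemma Nice.ii {f : ℝ → ℝ} (h : Nice f) : IntervalIntegrable f volume 0 1 := by
  obtain ⟨hm, C, hC⟩ := h
  rw [intervalIntegrable_iff_integrableOn_Ioc_of_le zero_le_one]
  refine Integrable.of_bound hm.aestronglyMeasurable C ?_
  refine (ae_restrict_mem measurableSet_Ioc).mono fun u hu => ?_
  exact hC u hu.1.le hu.2

lemma Nice.add {f g : ℝ → ℝ} (hf : Nice f) (hg : Nice g) : Nice (fun u => f u + g u) := by
  obtain ⟨hm, C, hC⟩ := hf
  obtain ⟨hm', C', hC'⟩ := hg
  exact ⟨hm.add hm', C + C', fun u h0 h1 =>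
    (abs_add_le _ _).trans (add_le_add (hC u h0 h1) (hC' u h0 h1))⟩

lemma Nice.mul {f g : ℝ → ℝ} (hf : Nice f) (hg : Nice g) : Nice (fun u => f u * g u) := by
  obtain ⟨hm, C, hC⟩ := hf
  obtain ⟨hm', C', hC'⟩ := hg
  refine ⟨hm.mul hm', C * C', fun u h0 h1 => ?_⟩
  rw [abs_mul]
  exact mul_le_mul (hC u h0 h1) (hC' u h0 h1) (abs_nonneg _) ((abs_nonneg _).trans (hC u h0 h1))

lemma Nice.const (c : ℝ) : Nice (fun _ => c) := ⟨measurable_const, |c|, fun _ _ _ => le_rfl⟩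

lemma Nice.sum {ι : Type*} (s : Finset ι) {f : ι → ℝ → ℝ} (hf : ∀ i ∈ s, Nice (f i)) :
    Nice (fun u => ∑ i ∈ s, f i u) := by
  classical
  induction s using Finset.induction_on with
  | empty => simpa using Nice.const 0
  | insert a s ha ih =>
    simp_rw [Finset.sum_insert ha]
    exact (hf a (by simp)).add (ih fun i hi => hf i (by simp [hi]))

lemma Nice.comp {f g : ℝ → ℝ} (hf : Nice f) (hg : Measurable g)
    (h : ∀ u, 0 ≤ u → u ≤ 1 → 0 ≤ g u ∧ g u ≤ 1) : Nice (fun u => f (g u)) := by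
  obtain ⟨hm, C, hC⟩ := hf
  exact ⟨hm.comp hg, C, fun u h0 h1 => hC _ (h u h0 h1).1 (h u h0 h1).2⟩

lemma halving {G : ℝ → ℝ} (hG : Nice G) :
    ∫ u in (0:ℝ)..1, G u = 1 / 2 * ∫ v in (0:ℝ)..1, (G (v / 2) + G (v / 2 + 1 / 2)) := by
  have h1 : Nice (fun v => G (v / 2)) :=
    hG.comp (by fun_prop) fun u a b => ⟨by linarith, by linarith⟩
  have h2 : Nice (fun v => G (v / 2 + 1 / 2)) :=
    hG.comp (by fun_prop) fun u a b => ⟨by linarith, by linarith⟩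
  rw [intervalIntegral.integral_add h1.ii h2.ii,
    intervalIntegral.integral_comp_div G (by norm_num : (2:ℝ) ≠ 0),
    intervalIntegral.integral_comp_div_add G (by norm_num : (2:ℝ) ≠ 0)]
  have k1 : IntervalIntegrable G volume 0 (1 / 2) :=
    hG.ii.mono_set (by
      rw [Set.uIcc_of_le (by norm_num), Set.uIcc_of_le (by norm_num)]
      exact Set.Icc_subset_Icc le_rfl (by norm_num))
  have k2 : IntervalIntegrable G volume (1 / 2) 1 :=
    hG.ii.mono_set (by
      rw [Set.uIcc_of_le (by norm_num), Set.uIcc_of_le (by norm_num)]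
      exact Set.Icc_subset_Icc (by norm_num) le_rfl)
  have := intervalIntegral.integral_add_adjacent_intervals k1 k2
  norm_num at this ⊢
  linarith

/-- Centred one-point discrepancy. -/
def Hc (t u : ℝ) : ℝ := st t u - u - (1 / 2 - t)

lemma Hc_nice (t : ℝ) : Nice (Hc t) := by
  refine ⟨((st_measurable t).sub measurable_id).sub measurable_const, 1 + 1 + |1 / 2 - t|,
    fun u h0 h1 => ?_⟩
  unfold Hc
  have a1 := st_abs_le t u
  have a2 : |u| ≤ 1 := by rw [abs_of_nonneg h0]; exact h1
  have a3 := abs_sub (st t u - u) (1 / 2 - t)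
  have a4 := abs_sub (st t u) u
  linarith

lemma Hc_abs_le (t u : ℝ) (ht0 : 0 ≤ t) (ht1 : t < 1) (h0 : 0 ≤ u) (h1 : u ≤ 1) :
    |Hc t u| ≤ 2 := by
  unfold Hc st
  rw [abs_le]
  split_ifs <;> constructor <;> linarith

lemma Hc_split_left (t v : ℝ) (ht0 : 0 ≤ t) (h1 : v ≤ 1) :
    Hc (t / 2) (v / 2) + Hc (t / 2 + 1 / 2) (v / 2) = Hc t v := by
  unfold Hc st
  rw [if_neg (show ¬ (t / 2 + 1 / 2 < v / 2) by linarith)]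
  by_cases h : t < v
  · rw [if_pos h, if_pos (by linarith)]; ring
  · rw [if_neg h, if_neg (by linarith)]; ring

lemma Hc_split_right (t v : ℝ) (ht1 : t < 1) (h0 : 0 ≤ v) :
    Hc (t / 2) (v / 2 + 1 / 2) + Hc (t / 2 + 1 / 2) (v / 2 + 1 / 2) = Hc t v := by
  unfold Hc st
  rw [if_pos (show (t / 2 < v / 2 + 1 / 2) by linarith)]
  by_cases h : t < v
  · rw [if_pos h, if_pos (by linarith)]; ring
  · rw [if_neg h, if_neg (by linarith)]; ring

lemma Hc_avg_left (t v : ℝ) (ht1 : t < 1) (h0 : 0 ≤ v) :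
    Hc (t / 2) (v / 2) + Hc (t / 2) (v / 2 + 1 / 2) = Hc t v := by
  unfold Hc st
  rw [if_pos (show (t / 2 < v / 2 + 1 / 2) by linarith)]
  by_cases h : t < v
  · rw [if_pos h, if_pos (by linarith)]; ring
  · rw [if_neg h, if_neg (by linarith)]; ring

lemma Hc_avg_right (t v : ℝ) (ht0 : 0 ≤ t) (h1 : v ≤ 1) :
    Hc (t / 2 + 1 / 2) (v / 2) + Hc (t / 2 + 1 / 2) (v / 2 + 1 / 2) = Hc t v := by
  unfold Hc st
  rw [if_neg (show ¬ (t / 2 + 1 / 2 < v / 2) by linarith)]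
  by_cases h : t < v
  · rw [if_pos h, if_pos (by linarith)]; ring
  · rw [if_neg h, if_neg (by linarith)]; ring

/-- Centred discrepancy of the van der Corput sequence. -/
def Fc (m : ℕ) (u : ℝ) : ℝ := ∑ i ∈ Finset.range m, Hc (vdc i) u

lemma Fc_nice (m : ℕ) : Nice (Fc m) := Nice.sum _ fun i _ => Hc_nice _

lemma Fc_succ (m : ℕ) (u : ℝ) : Fc (m + 1) u = Fc m u + Hc (vdc m) u := Finset.sum_range_succ _ _

lemma Fc_double_left (m : ℕ) (v : ℝ) (h1 : v ≤ 1) : Fc (2 * m) (v / 2) = Fc m v := by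
  induction m with
  | zero => simp [Fc]
  | succ m ih =>
    rw [show 2 * (m + 1) = 2 * m + 1 + 1 by ring, Fc_succ, Fc_succ, Fc_succ, ih, vdc_even, vdc_odd,
      add_assoc, Hc_split_left _ _ (vdc_mem m).1 h1]

lemma Fc_double_right (m : ℕ) (v : ℝ) (h0 : 0 ≤ v) : Fc (2 * m) (v / 2 + 1 / 2) = Fc m v := by
  induction m with
  | zero => simp [Fc]
  | succ m ih =>
    rw [show 2 * (m + 1) = 2 * m + 1 + 1 by ring, Fc_succ, Fc_succ, Fc_succ, ih, vdc_even, vdc_odd,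
      add_assoc, Hc_split_right _ _ (vdc_mem m).2 h0]

lemma cross_left (m : ℕ) :
    ∫ u in (0:ℝ)..1, Fc (2 * m) u * Hc (vdc (2 * m)) u
      = 1 / 2 * ∫ u in (0:ℝ)..1, Fc m u * Hc (vdc m) u := by
  rw [halving ((Fc_nice _).mul (Hc_nice _))]
  congr 1
  refine intervalIntegral.integral_congr fun v hv => ?_
  rw [Set.uIcc_of_le zero_le_one] at hv
  rw [Fc_double_left m v hv.2, Fc_double_right m v hv.1, ← mul_add, vdc_even,
    Hc_avg_left _ _ (vdc_mem m).2 hv.1]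

lemma cross_right (m : ℕ) :
    ∫ u in (0:ℝ)..1, Fc (2 * m) u * Hc (vdc (2 * m + 1)) u
      = 1 / 2 * ∫ u in (0:ℝ)..1, Fc m u * Hc (vdc m) u := by
  rw [halving ((Fc_nice _).mul (Hc_nice _))]
  congr 1
  refine intervalIntegral.integral_congr fun v hv => ?_
  rw [Set.uIcc_of_le zero_le_one] at hv
  rw [Fc_double_left m v hv.2, Fc_double_right m v hv.1, ← mul_add, vdc_odd,
    Hc_avg_right _ _ (vdc_mem m).1 hv.2]

lemma V_double (m : ℕ) :
    ∫ u in (0:ℝ)..1, Fc (2 * m) u * Fc (2 * m) u = ∫ u in (0:ℝ)..1, Fc m u * Fc m u := by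
  rw [halving ((Fc_nice _).mul (Fc_nice _)), ← intervalIntegral.integral_const_mul]
  refine intervalIntegral.integral_congr fun v hv => ?_
  rw [Set.uIcc_of_le zero_le_one] at hv
  rw [Fc_double_left m v hv.2, Fc_double_right m v hv.1]
  ring

lemma HH_int_abs_le (i j : ℕ) : |∫ u in (0:ℝ)..1, Hc (vdc i) u * Hc (vdc j) u| ≤ 4 := by
  have := intervalIntegral.norm_integral_le_of_norm_le_const (a := (0:ℝ)) (b := 1) (C := 4)
    (f := fun u => Hc (vdc i) u * Hc (vdc j) u) (by
      intro u hu
      rw [Set.uIoc_of_le zero_le_one] at hu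
      rw [Real.norm_eq_abs, abs_mul]
      have a := Hc_abs_le (vdc i) u (vdc_mem i).1 (vdc_mem i).2 hu.1.le hu.2
      have b := Hc_abs_le (vdc j) u (vdc_mem j).1 (vdc_mem j).2 hu.1.le hu.2
      nlinarith [abs_nonneg (Hc (vdc i) u), abs_nonneg (Hc (vdc j) u)])
  simpa using this

lemma C_bound (m : ℕ) : |∫ u in (0:ℝ)..1, Fc m u * Hc (vdc m) u| ≤ 8 := by
  induction m using Nat.strong_induction_on with
  | _ n ih =>
    rcases Nat.eq_zero_or_pos n with rfl | hn
    · simp [Fc]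
    · rcases Nat.even_or_odd' n with ⟨i, rfl | rfl⟩
      · have := ih i (by omega)
        rw [cross_left, abs_mul, abs_of_pos (by norm_num : (0:ℝ) < 1 / 2)]
        linarith
      · have h1 := ih i (by omega)
        have e : ∫ u in (0:ℝ)..1, Fc (2 * i + 1) u * Hc (vdc (2 * i + 1)) u
            = (∫ u in (0:ℝ)..1, Fc (2 * i) u * Hc (vdc (2 * i + 1)) u)
              + ∫ u in (0:ℝ)..1, Hc (vdc (2 * i)) u * Hc (vdc (2 * i + 1)) u := by
          rw [← intervalIntegral.integral_add ((Fc_nice _).mul (Hc_nice _)).ii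
            ((Hc_nice _).mul (Hc_nice _)).ii]
          refine intervalIntegral.integral_congr fun v _ => ?_
          rw [Fc_succ]; ring
        rw [e, cross_right]
        have h2 := HH_int_abs_le (2 * i) (2 * i + 1)
        refine (abs_add_le _ _).trans ?_
        rw [abs_mul, abs_of_pos (by norm_num : (0:ℝ) < 1 / 2)]
        linarith

lemma V_bound (L : ℕ) : ∀ n : ℕ, n < 2 ^ L → ∫ u in (0:ℝ)..1, Fc n u * Fc n u ≤ 12 * L := by
  induction L with
  | zero =>
    intro n hn
    have : n = 0 := by simpa using hn
    subst this
    simp [Fc]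
  | succ L ih =>
    intro n hn
    rw [pow_succ] at hn
    push_cast
    rcases Nat.even_or_odd' n with ⟨i, rfl | rfl⟩
    · have := ih i (by omega)
      rw [V_double]; linarith
    · have h1 := ih i (by omega)
      have e : ∫ u in (0:ℝ)..1, Fc (2 * i + 1) u * Fc (2 * i + 1) u
          = (∫ u in (0:ℝ)..1, Fc (2 * i) u * Fc (2 * i) u)
            + 2 * (∫ u in (0:ℝ)..1, Fc (2 * i) u * Hc (vdc (2 * i)) u)
            + ∫ u in (0:ℝ)..1, Hc (vdc (2 * i)) u * Hc (vdc (2 * i)) u := by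
        have n1 := (Fc_nice (2 * i)).mul (Fc_nice (2 * i))
        have n2 := (Nice.const 2).mul ((Fc_nice (2 * i)).mul (Hc_nice (vdc (2 * i))))
        have n3 := (Hc_nice (vdc (2 * i))).mul (Hc_nice (vdc (2 * i)))
        rw [← intervalIntegral.integral_const_mul, ← intervalIntegral.integral_add n1.ii n2.ii,
          ← intervalIntegral.integral_add (n1.add n2).ii n3.ii]
        refine intervalIntegral.integral_congr fun v _ => ?_
        rw [Fc_succ]; ring
      rw [e, V_double, cross_left]
      have h2 := (abs_le.1 (C_bound i)).2
      have h3 := (abs_le.1 (HH_int_abs_le (2 * i) (2 * i))).2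
      linarith


/-- Second coordinates of the symmetrized point set. -/
def zz (k : ℕ) : ℝ := if k % 2 = 0 then vdc (k / 2) else Int.fract (-vdc (k / 2))

lemma zz_mem (k : ℕ) : 0 ≤ zz k ∧ zz k < 1 := by
  unfold zz
  split_ifs
  · exact vdc_mem _
  · exact ⟨Int.fract_nonneg _, Int.fract_lt_one _⟩

/-- The symmetrized van der Corput point set. -/
def pp (N : ℕ) (k : Fin N) : ℝ × ℝ := (((k : ℕ) : ℝ) / N, zz k)

lemma pp_mem (N : ℕ) (k : Fin N) : pp N k ∈ unitSq := by
  have hN : (0:ℝ) < N := by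
    have : 0 < N := lt_of_le_of_lt (Nat.zero_le _) k.2
    exact_mod_cast this
  have hk : ((k : ℕ) : ℝ) < N := by exact_mod_cast k.2
  simp only [unitSq, Set.mem_prod, Set.mem_Ico, pp]
  refine ⟨⟨by positivity, ?_⟩, zz_mem _⟩
  rw [div_lt_one hN]; exact hk

lemma sum_two (f : ℕ → ℝ) (m : ℕ) :
    ∑ k ∈ Finset.range (2 * m), f k = ∑ i ∈ Finset.range m, (f (2 * i) + f (2 * i + 1)) := by
  induction m with
  | zero => simp
  | succ m ih =>
    rw [Finset.sum_range_succ, ← ih, show 2 * (m + 1) = 2 * m + 1 + 1 by ring,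
      Finset.sum_range_succ, Finset.sum_range_succ]
    ring

lemma pair_eq (t u : ℝ) (h0 : 0 < t) (h1 : t < 1) (hu : u ≠ 1 - t) :
    st t u + st (Int.fract (-t)) u - 2 * u = Hc t u - Hc t (1 - u) := by
  have hf : Int.fract (-t) = 1 - t := by
    rw [Int.fract_eq_iff]
    exact ⟨by linarith, by linarith, -1, by push_cast; ring⟩
  rw [hf]
  unfold Hc st
  rcases lt_or_gt_of_ne hu with h | h
  · rw [if_neg (show ¬ (1 - t < u) by linarith), if_pos (show t < 1 - u by linarith)]; ring
  · rw [if_pos (show (1 - t < u) by linarith), if_neg (show ¬ t < 1 - u by linarith)]; ring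

lemma pair_sum (u : ℝ) (hu1 : u < 1) (hu : ∀ i, u ≠ 1 - vdc i) (m : ℕ) :
    ∑ i ∈ Finset.range (m + 1), (st (zz (2 * i)) u + st (zz (2 * i + 1)) u - 2 * u) =
      Fc (m + 1) u - Fc (m + 1) (1 - u) + st 0 u := by
  have e0 : ∀ i, zz (2 * i) = vdc i := fun i => by
    unfold zz; rw [if_pos (by omega), show 2 * i / 2 = i by omega]
  have e1 : ∀ i, zz (2 * i + 1) = Int.fract (-vdc i) := fun i => by
    unfold zz; rw [if_neg (by omega), show (2 * i + 1) / 2 = i by omega]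
  induction m with
  | zero =>
    simp only [zero_add, Finset.sum_range_one, Fc, e0, e1, vdc_zero]
    simp only [mul_zero, zero_add, neg_zero, Int.fract_zero, e0 0, Hc]
    have : st 0 (1 - u) = 1 := if_pos (by linarith)
    have h2 : zz 0 = 0 := by have := e0 0; rwa [vdc_zero] at this
    have h3 : zz 1 = 0 := by have := e1 0; simpa [vdc_zero] using this
    simp only [this, h2, h3]
    ring
  | succ m ih =>
    rw [Finset.sum_range_succ, ih, e0, e1,
      pair_eq _ _ (vdc_pos _ (Nat.succ_pos m)) (vdc_mem _).2 (hu _)]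
    unfold Fc
    rw [Finset.sum_range_succ _ (m + 1), Finset.sum_range_succ _ (m + 1)]
    ring

lemma pair_bound (u : ℝ) (hu1 : u < 1) (hu : ∀ i, u ≠ 1 - vdc i) (m : ℕ) :
    |∑ i ∈ Finset.range m, (st (zz (2 * i)) u + st (zz (2 * i + 1)) u - 2 * u) -
      (Fc m u - Fc m (1 - u))| ≤ 1 := by
  cases m with
  | zero => simp [Fc]
  | succ m =>
    rw [pair_sum u hu1 hu m, add_sub_cancel_left]
    exact st_abs_le _ _

lemma disc_pp (N : ℕ) (hN : 0 < N) (x : ℝ × ℝ) (hx : x ∈ unitSq) (hu : ∀ i, x.2 ≠ 1 - vdc i) :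
    |disc N (pp N) x - (Fc (⌈N * x.1⌉₊ / 2) x.2 - Fc (⌈N * x.1⌉₊ / 2) (1 - x.2))| ≤ 3 := by
  have hN' : (0:ℝ) < N := by exact_mod_cast hN
  simp only [unitSq, Set.mem_prod, Set.mem_Ico] at hx
  obtain ⟨⟨ha, hb⟩, hc, hd⟩ := hx
  rw [disc_eq N _ (pp_mem N)]
  set n := ⌈N * x.1⌉₊ with hn
  have hnN : n ≤ N := Nat.ceil_le.2 (by nlinarith)
  have s1 : ∑ i : Fin N, st (pp N i).1 x.1 * st (pp N i).2 x.2 =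
      ∑ k ∈ Finset.range n, st (zz k) x.2 := by
    simp only [pp]
    rw [← Finset.sum_range (fun k : ℕ => st ((k:ℝ) / N) x.1 * st (zz k) x.2)]
    have : ∀ k ∈ Finset.range N, st ((k:ℝ) / N) x.1 * st (zz k) x.2 =
        if k ∈ Finset.range n then st (zz k) x.2 else 0 := by
      intro k _
      have hk : (k:ℝ) / N < x.1 ↔ k < n := by
        rw [hn, Nat.lt_ceil, div_lt_iff₀ hN', mul_comm]
      unfold st
      simp only [hk, Finset.mem_range]
      split_ifs <;> simp
    rw [Finset.sum_congr rfl this, Finset.sum_ite_mem]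
    congr 1
    ext k; simp only [Finset.mem_inter, Finset.mem_range]; omega
  rw [s1]
  have hpos : 0 ≤ (N:ℝ) * x.1 := by positivity
  have c1 : (N:ℝ) * x.1 ≤ n := Nat.le_ceil _
  have c2 : (n:ℝ) < N * x.1 + 1 := Nat.ceil_lt_add_one hpos
  set m := n / 2 with hm
  have hpb := pair_bound x.2 hd hu m
  rw [Finset.sum_sub_distrib, ← sum_two (fun k => st (zz k) x.2), Finset.sum_const,
    Finset.card_range, nsmul_eq_mul] at hpb
  have key : ∃ s : ℝ, 0 ≤ s ∧ s ≤ 1 ∧ ∑ k ∈ Finset.range n, st (zz k) x.2 =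
      ∑ k ∈ Finset.range (2 * m), st (zz k) x.2 + s ∧ (n:ℝ) - 1 ≤ 2 * m ∧ (2:ℝ) * m ≤ n := by
    rcases Nat.even_or_odd' n with ⟨j, hj | hj⟩
    · have : m = j := by omega
      refine ⟨0, le_rfl, zero_le_one, by rw [this, ← hj, add_zero], ?_, ?_⟩ <;>
      · rw [this, hj]; push_cast; linarith
    · have : m = j := by omega
      refine ⟨st (zz (2 * j)) x.2, ?_, ?_, ?_, ?_, ?_⟩
      · unfold st; split_ifs <;> norm_num
      · unfold st; split_ifs <;> norm_num
      · rw [this, hj, Finset.sum_range_succ]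
      · rw [this, hj]; push_cast; linarith
      · rw [this, hj]; push_cast; linarith
  obtain ⟨s, hs0, hs1, hs, hm1, hm2⟩ := key
  rw [hs]
  have q1 : |(2 * m - N * x.1) * x.2| ≤ 1 := by
    rw [abs_mul]
    have : |(2 * m - N * x.1)| ≤ 1 := by rw [abs_le]; constructor <;> linarith
    have h2 : |x.2| ≤ 1 := by rw [abs_of_nonneg hc]; exact hd.le
    exact mul_le_one₀ this (abs_nonneg _) h2
  rw [abs_le] at hpb q1 ⊢
  constructor <;> linarith [hpb.1, hpb.2, q1.1, q1.2]

lemma ae_ne : ∀ᵐ u ∂mu1, ∀ i, u ≠ 1 - vdc i := by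
  rw [ae_all_iff]
  intro i
  unfold mu1
  refine ae_restrict_of_ae ?_
  exact Measure.ae_ne volume _

lemma int_mu1 (f : ℝ → ℝ) : ∫ u, f u ∂mu1 = ∫ u in (0:ℝ)..1, f u := by
  unfold mu1
  rw [integral_Ico_eq_integral_Ioc, intervalIntegral.integral_of_le zero_le_one]

lemma Nice.int {f : ℝ → ℝ} (hf : Nice f) : Integrable f mu1 := by
  obtain ⟨hm, C, hC⟩ := hf
  exact bdd_integrable _ _ hm C (ae_mem_unit.mono fun u hu => hC u hu.1 hu.2.le)


lemma slice_bound (N L : ℕ) (hN : 0 < N) (hL : N < 2 ^ L) (a : ℝ) (ha : a ∈ Set.Ico (0:ℝ) 1) :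
    ∫ u, disc N (pp N) (a, u) ^ 2 ∂mu1 ≤ 18 + 96 * L := by
  set m := ⌈N * a⌉₊ / 2 with hm
  have hmL : m < 2 ^ L := by
    have h : ⌈N * a⌉₊ ≤ N := Nat.ceil_le.2 (by
      have : (0:ℝ) ≤ N := Nat.cast_nonneg N
      nlinarith [ha.2])
    have : m ≤ ⌈N * a⌉₊ := Nat.div_le_self _ _
    omega
  have n1 : Nice (fun u => Fc m u * Fc m u) := (Fc_nice m).mul (Fc_nice m)
  have n2 : Nice (fun u => Fc m (1 - u) * Fc m (1 - u)) :=
    n1.comp (g := fun u => 1 - u) (by fun_prop) fun u h0 h1 => ⟨by linarith, by linarith⟩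
  have n3 : Nice (fun u => 4 * (Fc m u * Fc m u)) := (Nice.const 4).mul n1
  have n4 : Nice (fun u => 4 * (Fc m (1 - u) * Fc m (1 - u))) := (Nice.const 4).mul n2
  have n5 : Nice (fun u => 18 + 4 * (Fc m u * Fc m u)) := (Nice.const 18).add n3
  have v := V_bound L m hmL
  have step : ∫ u, disc N (pp N) (a, u) ^ 2 ∂mu1 ≤
      ∫ u, (18 + 4 * (Fc m u * Fc m u) + 4 * (Fc m (1 - u) * Fc m (1 - u))) ∂mu1 := by
    refine integral_mono_of_nonneg (Filter.Eventually.of_forall fun u => sq_nonneg _)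
      (n5.add n4).int ?_
    filter_upwards [ae_mem_unit, ae_ne] with u hu hne
    have h := disc_pp N hN (a, u) ⟨ha, hu⟩ hne
    simp only [← hm] at h
    rw [abs_le] at h
    nlinarith [h.1, h.2, sq_nonneg (Fc m u + Fc m (1 - u)),
      sq_nonneg (disc N (pp N) (a, u) - 2 * (Fc m u - Fc m (1 - u)))]
  refine step.trans ?_
  rw [int_mu1, intervalIntegral.integral_add n5.ii n4.ii,
    intervalIntegral.integral_add (Nice.const 18).ii n3.ii,
    intervalIntegral.integral_const_mul, intervalIntegral.integral_const_mul,
    intervalIntegral.integral_comp_sub_left (fun u => Fc m u * Fc m u) 1]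
  simp only [sub_self, sub_zero, intervalIntegral.integral_const, smul_eq_mul, one_mul]
  linarith

lemma sq_bound (N L : ℕ) (hN : 0 < N) (hL : N < 2 ^ L) :
    ∫ x in unitSq, disc N (pp N) x ^ 2 ≤ 18 + 96 * L := by
  rw [restrict_unitSq]
  have hi : Integrable (fun x => disc N (pp N) x ^ 2) (mu1.prod mu1) := by
    refine bdd_integrable _ _ ((disc_measurable N _ (pp_mem N)).pow_const 2) ((2 * N) ^ 2) ?_
    filter_upwards [ae_mem_unitSq] with x hx
    rw [abs_pow]
    exact pow_le_pow_left₀ (abs_nonneg _) (disc_abs_le N _ (pp_mem N) x hx) 2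
  rw [integral_prod _ hi]
  calc ∫ a, ∫ u, disc N (pp N) (a, u) ^ 2 ∂mu1 ∂mu1 ≤ ∫ a, (18 + 96 * (L:ℝ)) ∂mu1 := by
        refine integral_mono_ae hi.integral_prod_left (integrable_const _) ?_
        filter_upwards [ae_mem_unit] with a ha
        exact slice_bound N L hN hL a ha
    _ = 18 + 96 * L := by simp

lemma log_ge_one (N : ℕ) (hN : 3 ≤ N) : 1 ≤ Real.log N := by
  have h3 : (3:ℝ) ≤ N := by exact_mod_cast hN
  rw [Real.le_log_iff_exp_le (by linarith)]
  linarith [Real.exp_one_lt_d9]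

lemma upper (N : ℕ) (hN : 3 ≤ N) :
    L2disc N (pp N) * Real.log N ^ (-(1:ℝ) / 2) ≤ 16 := by
  have hl := log_ge_one N hN
  have h := sq_bound N (Nat.log 2 N + 1) (by omega) (Nat.lt_pow_succ_log_self (by norm_num) N)
  have hk : (Nat.log 2 N : ℝ) * Real.log 2 ≤ Real.log N := by
    rw [← Real.log_pow]
    refine Real.log_le_log (by positivity) ?_
    exact_mod_cast Nat.pow_log_le_self 2 (by omega)
  have hb : ∫ x in unitSq, disc N (pp N) x ^ 2 ≤ 16 ^ 2 * Real.log N := by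
    refine h.trans ?_
    push_cast
    have l2 := Real.log_two_gt_d9
    have : (0:ℝ) ≤ Nat.log 2 N := Nat.cast_nonneg _
    nlinarith
  have hs : L2disc N (pp N) ≤ 16 * Real.sqrt (Real.log N) := by
    unfold L2disc
    refine (Real.sqrt_le_sqrt hb).trans ?_
    rw [Real.sqrt_mul (by norm_num), Real.sqrt_sq (by norm_num)]
  have hp : 0 < Real.sqrt (Real.log N) := Real.sqrt_pos.2 (by linarith)
  have e : Real.log N ^ (-(1:ℝ) / 2) = (Real.sqrt (Real.log N))⁻¹ := by
    rw [Real.sqrt_eq_rpow, ← Real.rpow_neg (by linarith)]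
    norm_num
  rw [e, ← div_eq_mul_inv, div_le_iff₀ hp]
  exact hs

/-- `limsup_{N→∞} inf_P ‖D_P | L₂‖·(log N)^{-1/2} ≥ 0.061`, the infimum being
over all `N`-point sets `P ⊂ [0,1)²`. -/
theorem limsup_inf_l2disc_ge :
    0.061 ≤ Filter.limsup (fun N : ℕ =>
      sInf { t : ℝ | ∃ p : Fin N → ℝ × ℝ, (∀ i, p i ∈ unitSq) ∧
        t = L2disc N p * Real.log N ^ (-(1:ℝ)/2) }) Filter.atTop := by
  refine Filter.le_limsup_of_frequently_le ?_ ?_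
  · rw [Filter.frequently_atTop]
    intro a
    refine ⟨5 * 2 ^ a, ?_, ?_⟩
    · have : a < 2 ^ a := Nat.lt_two_pow_self
      omega
    · refine le_csInf ⟨_, pp _, pp_mem _, rfl⟩ ?_
      rintro t ⟨p, hp, rfl⟩
      exact lower3 a p hp
  · refine Filter.isBoundedUnder_of_eventually_le (a := 16) ?_
    filter_upwards [Filter.eventually_ge_atTop 3] with N hN
    refine le_trans (csInf_le ?_ ?_) (upper N hN)
    swap
    · exact ⟨pp N, pp_mem N, rfl⟩
    refine ⟨0, ?_⟩
    rintro t ⟨p, -, rfl⟩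
    have hl := log_ge_one N hN
    exact mul_nonneg (Real.sqrt_nonneg _) (Real.rpow_nonneg (by linarith) _)

end
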